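/- arXiv:math/0406574 — 2 statements merged into one kernel-verified Lean document; each statement's English description precedes it below -/
import Mathlib

section
/- Let n ≥ 2 and let ν = (ν_n,…,ν_1), μ = (μ_n,…,μ_1) ∈ ℤ^n with ν_n ≥ … ≥ ν_1 ≥ 0 and μ_n ≥ … ≥ μ_1 ≥ 0. Assume μ_n ≥ ν_{n−1} and ν_n − μ_n ≥ 0, and set l = ν_n − μ_n, ν' = (ν_{n−1},…,ν_1), μ' = (μ_{n−1},…,μ_1). Then K^{B_n}_{ν,μ}(q) = q^l · Σ_{(r,m) ∈ ℕ², r + 2m = l} Σ_λ b^λ_{ν',r} · K^{B_{n−1}}_{λ,μ'}(q), where the inner sum is over all dominant weights λ of type B_{n−1} with integer coordinates (only finitely many terms are nonzero). -/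
open scoped BigOperators

noncomputable section

/-- The `q`-analogue of Kostant's partition function attached to the finite set `R`
of positive roots: the coefficient of `q^k` is the number of families
`(m_α)_{α ∈ R}` of nonnegative integers with `∑ m_α = k` and `∑ m_α • α = β`. -/
def kostantQ {n : ℕ} (R : Finset (Fin n → ℚ)) (β : Fin n → ℚ) : PowerSeries ℤ :=
  PowerSeries.mk fun k =>
    (Nat.card {m : {α // α ∈ R} → ℕ //
      (∑ α, m α) = k ∧ (∑ α, (m α : ℚ) • (α : Fin n → ℚ)) = β} : ℤ)

/-- Positive roots of type `D_n` : `e_i - e_j` and `e_i + e_j` for `j < i`. -/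
def rootsD (n : ℕ) : Finset (Fin n → ℚ) :=
  ((Finset.univ : Finset (Fin n × Fin n)).filter fun p => p.2 < p.1).image
      (fun p => Pi.single p.1 (1 : ℚ) - Pi.single p.2 1) ∪
  ((Finset.univ : Finset (Fin n × Fin n)).filter fun p => p.2 < p.1).image
      (fun p => Pi.single p.1 (1 : ℚ) + Pi.single p.2 1)

/-- Positive roots of type `B_n`. -/
def rootsB (n : ℕ) : Finset (Fin n → ℚ) :=
  rootsD n ∪ (Finset.univ : Finset (Fin n)).image fun i => Pi.single i (1 : ℚ)

/-- Positive roots of type `C_n`. -/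
def rootsC (n : ℕ) : Finset (Fin n → ℚ) :=
  rootsD n ∪ (Finset.univ : Finset (Fin n)).image fun i => Pi.single i (2 : ℚ)

/-- Positive roots of type `A_{n-1}` : `e_i - e_j` for `j < i`. -/
def rootsA (n : ℕ) : Finset (Fin n → ℚ) :=
  ((Finset.univ : Finset (Fin n × Fin n)).filter fun p => p.2 < p.1).image
      fun p => Pi.single p.1 (1 : ℚ) - Pi.single p.2 1

/-- `ρ` of type `B_n` : `e_i`-coordinate `i - 1/2` (`0`-based index `i ↦ i + 1/2`). -/
def rhoB (n : ℕ) : Fin n → ℚ := fun i => ((i : ℕ) : ℚ) + 1/2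

/-- `ρ` of type `C_n` : `e_i`-coordinate `i`. -/
def rhoC (n : ℕ) : Fin n → ℚ := fun i => ((i : ℕ) : ℚ) + 1

/-- `ρ` of type `D_n` : `e_i`-coordinate `i - 1`. -/
def rhoD (n : ℕ) : Fin n → ℚ := fun i => ((i : ℕ) : ℚ)

/-- `ρ` of type `A_{n-1}` : `e_i`-coordinate `i - 1`. -/
def rhoA (n : ℕ) : Fin n → ℚ := fun i => ((i : ℕ) : ℚ)

/-- The signed permutation `(σ, ε)` acting on a weight: it maps `e_j` to `± e_{σ j}`. -/
def wAct {n : ℕ} (σ : Equiv.Perm (Fin n)) (ε : Fin n → Bool) (β : Fin n → ℚ) :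
    Fin n → ℚ := fun i => (if ε i then -1 else 1) * β (σ⁻¹ i)

/-- The determinant (sign) of the signed permutation `(σ, ε)`. -/
def wDet {n : ℕ} (σ : Equiv.Perm (Fin n)) (ε : Fin n → Bool) : ℤ :=
  (Equiv.Perm.sign σ : ℤ) * ∏ i, (if ε i then (-1 : ℤ) else 1)

/-- Kostka-Foulkes polynomial of type `B_n`, as a power series in `q`. -/
def KB (n : ℕ) (lam mu : Fin n → ℚ) : PowerSeries ℤ :=
  ∑ σ : Equiv.Perm (Fin n), ∑ ε : Fin n → Bool,
    wDet σ ε • kostantQ (rootsB n) (wAct σ ε (lam + rhoB n) - (mu + rhoB n))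

/-- Kostka-Foulkes polynomial of type `C_n`, as a power series in `q`. -/
def KC (n : ℕ) (lam mu : Fin n → ℚ) : PowerSeries ℤ :=
  ∑ σ : Equiv.Perm (Fin n), ∑ ε : Fin n → Bool,
    wDet σ ε • kostantQ (rootsC n) (wAct σ ε (lam + rhoC n) - (mu + rhoC n))

/-- Kostka-Foulkes polynomial of type `D_n`, as a power series in `q` (the Weyl group
consists of the signed permutations with an even number of sign changes). -/
def KD (n : ℕ) (lam mu : Fin n → ℚ) : PowerSeries ℤ :=
  ∑ σ : Equiv.Perm (Fin n), ∑ ε : Fin n → Bool,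
    if (∏ i, (if ε i then (-1 : ℤ) else 1)) = 1 then
      wDet σ ε • kostantQ (rootsD n) (wAct σ ε (lam + rhoD n) - (mu + rhoD n))
    else 0

/-- Kostka-Foulkes polynomial of type `A_{n-1}`, as a power series in `q`. -/
def KA (n : ℕ) (lam mu : Fin n → ℚ) : PowerSeries ℤ :=
  ∑ σ : Equiv.Perm (Fin n),
    (Equiv.Perm.sign σ : ℤ) •
      kostantQ (rootsA n) ((fun i => (lam + rhoA n) (σ⁻¹ i)) - (mu + rhoA n))

/-- Dominant weight of type `B_n` : `λ_n ≥ ⋯ ≥ λ_1 ≥ 0`, all coordinates in `ℤ`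
or all in `ℤ + 1/2`. -/
def DominantB {n : ℕ} (lam : Fin n → ℚ) : Prop :=
  Monotone lam ∧ (∀ i, 0 ≤ lam i) ∧
    ((∀ i, ∃ z : ℤ, lam i = z) ∨ (∀ i, ∃ z : ℤ, lam i = z + 1/2))

/-- Dominant weight of type `C_n` : `λ_n ≥ ⋯ ≥ λ_1 ≥ 0`, integer coordinates. -/
def DominantC {n : ℕ} (lam : Fin n → ℚ) : Prop :=
  Monotone lam ∧ (∀ i, 0 ≤ lam i) ∧ ∀ i, ∃ z : ℤ, lam i = z

/-- Dominant weight of type `D_n` : `λ_n ≥ ⋯ ≥ λ_2 ≥ |λ_1|`, all coordinates in `ℤ`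
or all in `ℤ + 1/2`. -/
def DominantD {n : ℕ} (lam : Fin n → ℚ) : Prop :=
  (∀ i j : Fin n, i ≤ j → 0 < (i : ℕ) → lam i ≤ lam j) ∧
  (∀ h : 0 < n, ∀ j : Fin n, 0 < (j : ℕ) → |lam ⟨0, h⟩| ≤ lam j) ∧
  ((∀ i, ∃ z : ℤ, lam i = z) ∨ (∀ i, ∃ z : ℤ, lam i = z + 1/2))

/-- Restriction of a weight of rank `n` to the first `n - 1` coordinates
(i.e. forgetting the `e_n`-coordinate). -/
def restrict1 {n : ℕ} (lam : Fin n → ℚ) : Fin (n - 1) → ℚ :=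
  fun i => lam ⟨(i : ℕ), by have := i.2; omega⟩

/-- Pieri number `b^λ_{γ,r}` of type `B_n`. -/
def bPieri {m : ℕ} (γ lam : Fin m → ℚ) (r : ℕ) : ℕ :=
  Nat.card {t : (Fin m → ℕ) × (Fin m → ℕ) × Bool //
    ((cond t.2.2 1 0) + ∑ i, (t.1 i + t.2.1 i)) = r ∧
    (∀ i, ((t.2.1 i : ℚ) - (t.1 i : ℚ)) = lam i - γ i) ∧
    (∀ i : Fin m, ∀ h : (i : ℕ) + 1 < m,
      lam i ≤ lam ⟨(i : ℕ) + 1, h⟩ - (t.2.1 ⟨(i : ℕ) + 1, h⟩ : ℚ)) ∧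
    (∀ i : Fin m, ∀ h : (i : ℕ) + 1 < m,
      lam i + (t.1 i : ℚ) - (t.2.1 i : ℚ) ≤
        lam ⟨(i : ℕ) + 1, h⟩ - (t.2.1 ⟨(i : ℕ) + 1, h⟩ : ℚ)) ∧
    (∀ h : 0 < m,
      if t.2.2 then (0 : ℚ) < lam ⟨0, h⟩ - (t.2.1 ⟨0, h⟩ : ℚ)
      else (0 : ℚ) ≤ lam ⟨0, h⟩ - (t.2.1 ⟨0, h⟩ : ℚ))}

/-- Pieri number `c^λ_{γ,r}` of type `C_n`. -/
def cPieri {m : ℕ} (γ lam : Fin m → ℚ) (r : ℕ) : ℕ :=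
  Nat.card {t : (Fin m → ℕ) × (Fin m → ℕ) //
    (∑ i, (t.1 i + t.2 i)) = r ∧
    (∀ i, ((t.2 i : ℚ) - (t.1 i : ℚ)) = lam i - γ i) ∧
    (∀ i : Fin m, ∀ h : (i : ℕ) + 1 < m,
      lam i ≤ lam ⟨(i : ℕ) + 1, h⟩ - (t.2 ⟨(i : ℕ) + 1, h⟩ : ℚ)) ∧
    (∀ i : Fin m, ∀ h : (i : ℕ) + 1 < m,
      lam i + (t.1 i : ℚ) - (t.2 i : ℚ) ≤
        lam ⟨(i : ℕ) + 1, h⟩ - (t.2 ⟨(i : ℕ) + 1, h⟩ : ℚ)) ∧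
    (∀ h : 0 < m, (0 : ℚ) ≤ lam ⟨0, h⟩ - (t.2 ⟨0, h⟩ : ℚ))}

/-- Pieri number `d^λ_{γ,r}` of type `D_n`. -/
def dPieri {m : ℕ} (γ lam : Fin m → ℚ) (r : ℕ) : ℕ :=
  Nat.card {t : (Fin m → ℕ) × (Fin m → ℕ) //
    (∀ h : 0 < m, min (t.1 ⟨0, h⟩) (t.2 ⟨0, h⟩) = 0) ∧
    (∑ i, (t.1 i + t.2 i)) = r ∧
    (∀ i, ((t.2 i : ℚ) - (t.1 i : ℚ)) = lam i - γ i) ∧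
    (∀ h : 1 < m,
      (t.1 ⟨0, by omega⟩ = 0 →
        lam ⟨0, by omega⟩ ≤ lam ⟨1, h⟩ - (t.2 ⟨1, h⟩ : ℚ)) ∧
      (0 < t.1 ⟨0, by omega⟩ →
        -lam ⟨0, by omega⟩ ≤ lam ⟨1, h⟩ - (t.2 ⟨1, h⟩ : ℚ))) ∧
    (∀ i : Fin m, 1 ≤ (i : ℕ) → ∀ h : (i : ℕ) + 1 < m,
      lam i ≤ lam ⟨(i : ℕ) + 1, h⟩ - (t.2 ⟨(i : ℕ) + 1, h⟩ : ℚ)) ∧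
    (∀ i : Fin m, 1 ≤ (i : ℕ) → ∀ h : (i : ℕ) + 1 < m,
      lam i + (t.1 i : ℚ) - (t.2 i : ℚ) ≤
        lam ⟨(i : ℕ) + 1, h⟩ - (t.2 ⟨(i : ℕ) + 1, h⟩ : ℚ)) ∧
    (∀ h : 1 < m,
      (t.1 ⟨0, by omega⟩ = 0 → 0 ≤ γ ⟨0, by omega⟩ →
        lam ⟨0, by omega⟩ - (t.2 ⟨0, by omega⟩ : ℚ) ≤ lam ⟨1, h⟩ - (t.2 ⟨1, h⟩ : ℚ)) ∧
      (t.2 ⟨0, by omega⟩ = 0 → 0 ≤ γ ⟨0, by omega⟩ →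
        lam ⟨0, by omega⟩ + (t.1 ⟨0, by omega⟩ : ℚ) ≤ lam ⟨1, h⟩ - (t.2 ⟨1, h⟩ : ℚ)) ∧
      (t.2 ⟨0, by omega⟩ = 0 → γ ⟨0, by omega⟩ < 0 →
        -lam ⟨0, by omega⟩ - (t.1 ⟨0, by omega⟩ : ℚ) ≤ lam ⟨1, h⟩ - (t.2 ⟨1, h⟩ : ℚ)) ∧
      (t.1 ⟨0, by omega⟩ = 0 → γ ⟨0, by omega⟩ < 0 →
        -lam ⟨0, by omega⟩ + (t.2 ⟨0, by omega⟩ : ℚ) ≤ lam ⟨1, h⟩ - (t.2 ⟨1, h⟩ : ℚ)))}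

/-- The monomial `x^β = ∏ y_i ^ (2 β_i)` in the Laurent polynomial ring
`ℤ[y_1^{±1}, …, y_n^{±1}]`, realized as the group algebra of `ℤ^n`. -/
def xpow {n : ℕ} (β : Fin n → ℚ) : AddMonoidAlgebra ℤ (Fin n → ℤ) :=
  AddMonoidAlgebra.single (fun i => ⌊2 * β i⌋) 1

/-- The Weyl alternant `a_β = ∑_{σ ∈ W_{B_n}} det σ · x^{σ β}` of type `B_n`. -/
def altB {n : ℕ} (β : Fin n → ℚ) : AddMonoidAlgebra ℤ (Fin n → ℤ) :=
  ∑ σ : Equiv.Perm (Fin n), ∑ ε : Fin n → Bool, wDet σ ε • xpow (wAct σ ε β)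

/-- The Weyl alternant `a_β = ∑_{σ ∈ W_{D_n}} det σ · x^{σ β}` of type `D_n`. -/
def altD {n : ℕ} (β : Fin n → ℚ) : AddMonoidAlgebra ℤ (Fin n → ℤ) :=
  ∑ σ : Equiv.Perm (Fin n), ∑ ε : Fin n → Bool,
    if (∏ i, (if ε i then (-1 : ℤ) else 1)) = 1 then wDet σ ε • xpow (wAct σ ε β) else 0

end

/-!
By the hypotheses on `ν_n` and `μ_n`, a signed permutation `σ` for which the top coordinate of
`σ(ν + ρ) - (μ + ρ)` is nonnegative fixes `e_n`, and that coordinate is then `l`. So a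
decomposition into positive roots uses exactly `l` of the roots `e_n`, `e_n ± e_j`. Such a choice
is an `l`-step walk with steps `0`, `±e_j`, and `K^{B_n}_{ν,μ}` is `q ^ l` times the sum over
these walks of the rank `n - 1` alternant evaluated at `ν' + ρ` moved along the walk.

The walks with displacement `θ` are counted by `(1 - X)⁻¹ ∏ X ^ |θ_i| / (1 - X ^ 2)`. In the sum
over end points the alternant changes sign under the Weyl group. Its reflections pair the end points
`c_i` and `-1 - c_i`, and the difference of the corresponding two factors is a sum over
`d_i ≤ min a_i c_i`, where `a` is the starting point. Its transpositions cancel all terms except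
those in which `d` interlaces with `a` and `c`, and these encode the Pieri data. The one factor
`(1 - X ^ 2)⁻¹` that survives is the sum over `m`.
-/

section Antisymmetric

open Finset

variable {ι α M : Type*} [AddCommGroup M]

/-- A function of the family `d` that changes sign when two members of `d` are exchanged. -/
def IsAntisymmetric [DecidableEq ι] (G : (ι → α) → M) : Prop :=
  ∀ (d : ι → α) ⦃i j : ι⦄, i ≠ j → G (d ∘ Equiv.swap i j) = -G d

variable [LinearOrder ι]

/-- The pairs `(i, j)` with `i < j` for which exchanging `d i` and `d j` keeps `d i ∈ I i` for all
`i` (when `I` is increasing), ordered lexicographically. -/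
def overlaps (I : ι → Finset α) (d : ι → α) : Set (ι ×ₗ ι) :=
  {p | (ofLex p).1 < (ofLex p).2 ∧ d (ofLex p).2 ∈ I (ofLex p).1}

theorem toLex_mem_overlaps {I : ι → Finset α} {d : ι → α} {i j : ι} :
    toLex (i, j) ∈ overlaps I d ↔ i < j ∧ d j ∈ I i := Iff.rfl

theorem isLeast_overlaps_comp_swap {I : ι → Finset α} {d : ι → α} {i j : ι} (hd : d i ∈ I i)
    (h : IsLeast (overlaps I d) (toLex (i, j))) :
    IsLeast (overlaps I (d ∘ Equiv.swap i j)) (toLex (i, j)) := by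
  obtain ⟨⟨hij, -⟩, hmin⟩ := h
  change i < j at hij
  refine ⟨⟨hij, by simpa using hd⟩, ?_⟩
  rintro ⟨k, n⟩ ⟨hkn, hn⟩
  change k < n at hkn
  change d (Equiv.swap i j n) ∈ I k at hn
  refine Prod.Lex.toLex_le_toLex.2 ?_
  rcases lt_trichotomy i k with hik | rfl | hki
  · exact Or.inl hik
  · refine Or.inr ⟨rfl, le_of_not_gt fun hnj => ?_⟩
    rw [Equiv.swap_apply_of_ne_of_ne hkn.ne' hnj.ne] at hn
    have := Prod.Lex.toLex_le_toLex.1 (hmin (toLex_mem_overlaps.2 ⟨hkn, hn⟩))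
    grind
  · have hk : k < Equiv.swap i j n := by
      rw [Equiv.swap_apply_def]
      split_ifs
      exacts [hki.trans hij, hki, hkn]
    have := Prod.Lex.toLex_le_toLex.1 (hmin (toLex_mem_overlaps.2 ⟨hk, hn⟩))
    grind

theorem IsAntisymmetric.sum_piFinset [Fintype ι] [DecidableEq α] [IsAddTorsionFree M]
    {G : (ι → α) → M} (hG : IsAntisymmetric G) {I : ι → Finset α} (hI : Monotone I) :
    ∑ d ∈ Fintype.piFinset I, G d =
      ∑ d ∈ Fintype.piFinset I with ∀ i j, i < j → d j ∉ I i, G d := by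
  rw [← sum_filter_add_sum_filter_not _ (fun d => ∀ i j, i < j → d j ∉ I i), add_eq_left]
  have mem_overlapping {d : ι → α} :
      d ∈ {d ∈ Fintype.piFinset I | ¬ ∀ i j, i < j → d j ∉ I i} ↔
        (∀ i, d i ∈ I i) ∧ ∃ i j, i < j ∧ d j ∈ I i := by
    simp
  have exists_least (d) (hd : d ∈ {d ∈ Fintype.piFinset I | ¬ ∀ i j, i < j → d j ∉ I i}) :
      ∃ i j, IsLeast (overlaps I d) (toLex (i, j)) := by
    obtain ⟨-, i, j, hij⟩ := mem_overlapping.1 hd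
    have hne : (overlaps I d).Nonempty := ⟨toLex (i, j), hij⟩
    exact ⟨_, _, wellFounded_lt.min_mem _ hne, fun _ h => wellFounded_lt.min_le h⟩
  choose i j hleast using exists_least
  have swap_mem (d) (hd) : d ∘ Equiv.swap (i d hd) (j d hd) ∈
      {d ∈ Fintype.piFinset I | ¬ ∀ i j, i < j → d j ∉ I i} := by
    have hmem := (mem_overlapping.1 hd).1
    have hij := toLex_mem_overlaps.1 (hleast d hd).1
    refine mem_overlapping.2 ⟨fun k => ?_, i d hd, j d hd, hij.1, by simpa using hmem _⟩
    rw [Function.comp_apply, Equiv.swap_apply_def]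
    split_ifs with hk hk
    exacts [hk ▸ hij.2, hk ▸ hI hij.1.le (hmem _), hmem k]
  have swap_neg (d) (hd) : G (d ∘ Equiv.swap (i d hd) (j d hd)) = -G d :=
    hG d (toLex_mem_overlaps.1 (hleast d hd).1).1.ne
  refine sum_involution (fun d hd => d ∘ Equiv.swap (i d hd) (j d hd)) (fun d hd => ?_)
    (fun d hd hne heq => hne ?_) swap_mem fun d hd => ?_
  · rw [swap_neg, add_neg_cancel]
  · rw [← self_eq_neg, ← swap_neg d hd, heq]
  · have hpair := (hleast _ (swap_mem d hd)).unique
      (isLeast_overlaps_comp_swap ((mem_overlapping.1 hd).1 _) (hleast d hd))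
    obtain ⟨hi, hj⟩ := Prod.mk.inj (toLex.injective hpair)
    ext k
    simp [hi, hj]

end Antisymmetric

section Interlacing

open Finset

variable {ι M : Type*} [Fintype ι] [LinearOrder ι]

/-- The families `d` interlacing with `a` and `c`: each `d j` lies weakly below `a j` and `c j` and
strictly above all `a i` and `c i` with `i < j`. -/
def interlacing (a c : ι → ℕ) : Finset (ι → ℕ) :=
  {d ∈ Fintype.piFinset fun i => range (min (a i) (c i) + 1) | ∀ i j, i < j → max (a i) (c i) < d j}

theorem mem_interlacing {a c d : ι → ℕ} :
    d ∈ interlacing a c ↔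
      (∀ i, d i ≤ a i ∧ d i ≤ c i) ∧ ∀ i j, i < j → a i < d j ∧ c i < d j := by
  simp [interlacing]

theorem strictMono_of_mem_interlacing {a c d : ι → ℕ} (h : d ∈ interlacing a c) :
    StrictMono d := fun i j hij =>
  ((mem_interlacing.1 h).1 i).1.trans_lt ((mem_interlacing.1 h).2 i j hij).1

theorem strictMono_right_of_mem_interlacing {a c d : ι → ℕ} (h : d ∈ interlacing a c) :
    StrictMono c := fun i j hij =>
  ((mem_interlacing.1 h).2 i j hij).2.trans_le ((mem_interlacing.1 h).1 j).2

variable [AddCommGroup M] [IsAddTorsionFree M]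

theorem IsAntisymmetric.sum_Ico {G : (ι → ℕ) → M} (hG : IsAntisymmetric G) {N : ℕ} {d : ι → ℕ}
    (hd : Monotone d) :
    ∑ c ∈ Fintype.piFinset (fun i => Ico (d i) N), G c =
      ∑ c ∈ Fintype.piFinset (fun i => Ico (d i) N) with ∀ i j, i < j → c i < d j, G c := by
  have hI : Monotone (fun i : ιᵒᵈ => Ico (d (OrderDual.ofDual i)) N) := fun i j hij =>
    Ico_subset_Ico_left (hd hij)
  refine (IsAntisymmetric.sum_piFinset (ι := ιᵒᵈ) (by exact hG) hI).trans
    (sum_congr (filter_congr fun c hc => ⟨fun h i j hij => ?_, fun h j i hij hj => ?_⟩)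
      fun _ _ => rfl)
  · have hmem := h j i hij
    rw [mem_Ico, not_and_or, not_le] at hmem
    exact hmem.resolve_right (not_not.2 (mem_Ico.1 (Fintype.mem_piFinset.1 hc i)).2)
  · exact (h i j hij).not_ge (mem_Ico.1 hj).1

theorem sum_le_min_eq_sum_interlacing {a : ι → ℕ} (ha : Monotone a) (N : ℕ)
    {E : (ι → ℕ) → (ι → ℕ) → M} (hd : ∀ d c i j, E (d ∘ Equiv.swap i j) c = E d c)
    (hc : ∀ d, IsAntisymmetric (E d)) :
    ∑ c ∈ Fintype.piFinset (fun _ => range N),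
        ∑ d ∈ Fintype.piFinset (fun i => range (min (a i) (c i) + 1)), E d c =
      ∑ c ∈ Fintype.piFinset (fun _ => range N), ∑ d ∈ interlacing a c, E d c := by
  have hG : IsAntisymmetric fun d => ∑ c ∈ Fintype.piFinset (fun i => Ico (d i) N), E d c := by
    intro d i j hij
    rw [← sum_neg_distrib]
    refine sum_equiv ((Equiv.swap i j).arrowCongr (Equiv.refl ℕ)) (fun c => ?_) fun c _ => ?_
    · simp only [Fintype.mem_piFinset]
      refine ⟨fun h k => ?_, fun h k => ?_⟩
      · simpa using h (Equiv.swap i j k)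
      · simpa using h (Equiv.swap i j k)
    · rw [hd]
      exact eq_neg_of_add_eq_zero_left (add_eq_zero_iff_eq_neg'.2 (hc d c hij))
  calc
    _ = ∑ d ∈ Fintype.piFinset (fun i => range (a i + 1)),
          ∑ c ∈ Fintype.piFinset (fun i => Ico (d i) N), E d c := by
      refine sum_comm' fun c d => ?_
      simp only [Fintype.mem_piFinset, mem_range, mem_Ico, Nat.lt_succ_iff, le_min_iff]
      grind
    _ = ∑ d ∈ Fintype.piFinset (fun i => range (a i + 1)) with ∀ i j, i < j → a i < d j,
          ∑ c ∈ Fintype.piFinset (fun i => Ico (d i) N) with ∀ i j, i < j → c i < d j, E d c := by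
      rw [hG.sum_piFinset fun i j hij => range_mono (Nat.succ_le_succ (ha hij))]
      simp only [mem_range, Nat.lt_succ_iff, not_le]
      refine sum_congr rfl fun d hd => (hc d).sum_Ico (StrictMono.monotone fun i j hij => ?_)
      simp only [mem_filter, Fintype.mem_piFinset, mem_range] at hd
      grind
    _ = _ := by
      refine sum_comm' fun d c => ?_
      simp only [mem_filter, Fintype.mem_piFinset, mem_range, mem_Ico, mem_interlacing]
      grind

end Interlacing

section Series

open Finset PowerSeries

variable (R : Type*) [CommRing R]

/-- The power series `1 / (1 - X ^ 2)`. -/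
def evenSeries : R⟦X⟧ := PowerSeries.mk fun n => if Even n then 1 else 0

theorem evenSeries_mul_one_add_X : evenSeries R * (1 + X) = PowerSeries.mk 1 := by
  ext n
  cases n with
  | zero => simp [evenSeries]
  | succ n =>
    rw [mul_add, mul_one, map_add, coeff_succ_mul_X]
    by_cases hn : Even n <;> simp [evenSeries, Nat.even_add_one, hn]

theorem evenSeries_mul_one_sub_X_sq : evenSeries R * (1 - X ^ 2) = 1 := by
  have h := mk_one_mul_one_sub_eq_one R
  rw [← evenSeries_mul_one_add_X] at h
  linear_combination h

variable {R} in
theorem coeff_evenSeries_mul (F : R⟦X⟧) (l : ℕ) :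
    coeff l (evenSeries R * F) =
      ∑ p ∈ range (l + 1) ×ˢ range (l + 1), if p.1 + 2 * p.2 = l then coeff p.1 F else 0 := by
  rw [mul_comm, coeff_mul, ← sum_filter]
  simp only [evenSeries, coeff_mk, mul_ite, mul_one, mul_zero, ← sum_filter]
  refine sum_nbij' (fun p => (p.1, p.2 / 2)) (fun p => (p.1, 2 * p.2)) ?_ ?_ ?_ ?_ fun _ _ => rfl
  · rintro ⟨r, s⟩ h
    simp only [mem_filter, HasAntidiagonal.mem_antidiagonal, mem_product, mem_range] at h ⊢
    have := Nat.two_mul_div_two_of_even h.2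
    omega
  · rintro ⟨r, s⟩ h
    simp_all
  · rintro ⟨r, s⟩ h
    simp [Nat.two_mul_div_two_of_even (mem_filter.1 h).2]
  · rintro ⟨r, s⟩ -
    simp

theorem coeff_evenSeries_mul_X_pow (k n : ℕ) :
    coeff n (evenSeries R * X ^ k) = if k ≤ n ∧ Even (n - k) then 1 else 0 := by
  simp [coeff_mul_X_pow', evenSeries, ite_and]

/-- The factor contributed by a common lower bound `d`: reflecting at `-1/2` turns the weight
`1 / (1 - X ^ 2)` into `1`, except at the wall `d = 0`. -/
noncomputable def wallWeight (d : ℕ) : R⟦X⟧ := if d = 0 then evenSeries R * (1 - X) else 1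

theorem evenSeries_mul_X_pow_sub_reflection (a c : ℕ) :
    evenSeries R * X ^ ((c : ℤ) - a).natAbs - evenSeries R * X ^ (-1 - (c : ℤ) - a).natAbs =
      ∑ d ∈ range (min a c + 1), wallWeight R d * X ^ (a + c - 2 * d) := by
  have key (m s : ℕ) : evenSeries R * X ^ s - evenSeries R * X ^ (s + 2 * m + 1) =
      ∑ d ∈ range (m + 1), wallWeight R d * X ^ (s + 2 * m - 2 * d) := by
    induction m generalizing s with
    | zero =>
      simp only [wallWeight, zero_add, sum_range_one, mul_zero, add_zero, tsub_zero, if_true]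
      ring
    | succ m ih =>
      have hs : s + 2 * (m + 1) = s + 2 + 2 * m := by ring
      rw [sum_range_succ, hs, ← ih, show s + 2 + 2 * m - 2 * (m + 1) = s by omega]
      have hX : X ^ s = evenSeries R * (1 - X ^ 2) * X ^ s := by
        rw [evenSeries_mul_one_sub_X_sq, one_mul]
      simp only [wallWeight, Nat.add_eq_zero_iff, one_ne_zero, and_false, if_false, one_mul]
      linear_combination -hX
  have h₁ : ((c : ℤ) - a).natAbs + 2 * min a c = a + c := by omega
  have h₂ : (-1 - (c : ℤ) - a).natAbs = a + c + 1 := by omega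
  rw [h₂, ← h₁, key]

theorem mk_one_mul_prod_wallWeight {ι : Type*} [Fintype ι] {d : ι → ℕ}
    (hd : Function.Injective d) :
    PowerSeries.mk 1 * ∏ i, wallWeight R (d i) =
      evenSeries R * ∑ b : Bool with b = true → ∀ i, d i ≠ 0, X ^ (cond b 1 0) := by
  rw [← evenSeries_mul_one_add_X]
  by_cases h : ∀ i, d i ≠ 0
  · simp [wallWeight, h, add_comm]
  · obtain ⟨i, hi⟩ : ∃ i, d i = 0 := by simpa using h
    have hprod : ∏ j, wallWeight R (d j) = evenSeries R * (1 - X) := by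
      rw [Fintype.prod_eq_single i fun j hj => ?_]
      · exact if_pos hi
      · exact if_neg (hi ▸ hd.ne hj)
    have hfilter : ({b : Bool | b = true → ∀ i, d i ≠ 0} : Finset Bool) = {false} := by
      ext b
      simp [h]
    rw [hprod, hfilter, sum_singleton, cond_false, pow_zero]
    linear_combination evenSeries R * evenSeries_mul_one_sub_X_sq R

theorem isAddTorsionFree_powerSeries (M : Type*) [Semiring M] [IsAddTorsionFree M] :
    IsAddTorsionFree M⟦X⟧ := by
  refine ⟨fun n hn F G h => ?_⟩
  ext k
  exact IsAddTorsionFree.nsmul_right_injective hn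
    (by simpa only [map_nsmul] using congrArg (coeff k) h)

end Series

section Reflection

open Finset

variable {ι R : Type*}

/-- The reflection of the coordinates `c i` with `ε i = true` about `-1 / 2`. -/
def reflect (ε : ι → Bool) (c : ι → ℤ) : ι → ℤ := fun i => if ε i then -1 - c i else c i

variable [Fintype ι] [DecidableEq ι]

theorem sum_reflect_range {M : Type*} [AddCommMonoid M] (N : ℕ) (f : (ι → ℤ) → M) :
    ∑ c ∈ Fintype.piFinset (fun _ => range N), ∑ ε, f (reflect ε fun i => (c i : ℤ)) =
      ∑ c ∈ Fintype.piFinset (fun _ => Ico (-N : ℤ) N), f c := by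
  rw [← sum_product']
  refine sum_nbij' (fun p => reflect p.2 fun i => (p.1 i : ℤ))
    (fun c => (fun i => (max (c i) (-1 - c i)).toNat, fun i => decide (c i < 0))) ?_ ?_ ?_ ?_
    fun _ _ => rfl
  · rintro ⟨c, ε⟩ h
    simp only [mem_product, Fintype.mem_piFinset, mem_range, mem_univ, and_true, mem_Ico,
      reflect] at h ⊢
    grind
  · intro c h
    simp only [mem_product, Fintype.mem_piFinset, mem_range, mem_univ, and_true, mem_Ico] at h ⊢
    grind
  · rintro ⟨c, ε⟩ -
    ext i
    all_goals cases h : ε i <;> simp [reflect, h] <;> omega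
  · rintro c -
    ext i
    simp only [reflect, decide_eq_true_eq]
    split_ifs <;> omega

theorem sum_prod_mul_eq_sum_reflected [CommRing R] {A : (ι → ℤ) → R}
    (hA : ∀ ε c, A (reflect ε c) = (∏ i, if ε i then -1 else 1) * A c) (N : ℕ) (f : ι → ℤ → R) :
    ∑ c ∈ Fintype.piFinset (fun _ => Ico (-N : ℤ) N), (∏ i, f i (c i)) * A c =
      ∑ c ∈ Fintype.piFinset (fun _ => range N),
        (∏ i, (f i (c i) - f i (-1 - c i))) * A fun i => (c i : ℤ) := by
  rw [← sum_reflect_range]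
  refine sum_congr rfl fun c _ => ?_
  have hsub (i : ι) : f i (c i) - f i (-1 - c i) =
      ∑ ε : Bool, f i (if ε then -1 - c i else c i) * if ε then -1 else 1 := by
    simp only [Fintype.sum_bool, if_true, Bool.false_eq_true, if_false]
    ring
  simp only [hsub, prod_univ_sum, Fintype.piFinset_univ, sum_mul, hA, prod_mul_distrib, reflect,
    mul_assoc]

end Reflection

section Displacement

open Finset PowerSeries

variable {ι R : Type*} [Fintype ι] [DecidableEq ι] [CommRing R]

/-- The displacement of a walk which, besides idle steps counted by `τ none`, takes
`τ (some (i, b))` steps along the `i`-th coordinate axis, forwards if `b` and backwards if not. -/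
def displacement (τ : Option (ι × Bool) → ℕ) : ι → ℤ := fun i =>
  (τ (some (i, true)) : ℤ) - τ (some (i, false))

theorem mem_piAntidiag_iff_displacement {τ : Option (ι × Bool) → ℕ} {l : ℕ} :
    τ ∈ piAntidiag univ l ↔
      τ none + ∑ i, (τ (some (i, true)) + τ (some (i, false))) = l := by
  simp [Fintype.sum_option, Fintype.sum_prod_type]

theorem abs_displacement_le {τ : Option (ι × Bool) → ℕ} {l : ℕ} (hτ : τ ∈ piAntidiag univ l)
    (i : ι) : |displacement τ i| ≤ l := by
  rw [mem_piAntidiag_iff_displacement] at hτ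
  have := single_le_sum (f := fun i => τ (some (i, true)) + τ (some (i, false)))
    (fun _ _ => Nat.zero_le _) (mem_univ i)
  rw [displacement, abs_le]
  grind

theorem coeff_mk_one_mul_prod_evenSeries (k : ι → ℕ) (l : ℕ) :
    coeff l (PowerSeries.mk 1 * ∏ i, evenSeries R * X ^ k i) =
      (#{r ∈ finsuppAntidiag (univ : Finset (Option ι)) l |
        ∀ i, k i ≤ r (some i) ∧ Even (r (some i) - k i)} : R) := by
  let F : Option ι → R⟦X⟧ := fun o => o.elim (PowerSeries.mk 1) fun i => evenSeries R * X ^ k i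
  have hcoeff (r : Option ι →₀ ℕ) : ∏ o, coeff (r o) (F o) =
      if ∀ i, k i ≤ r (some i) ∧ Even (r (some i) - k i) then 1 else 0 := by
    simp [F, Fintype.prod_option, coeff_evenSeries_mul_X_pow, prod_ite_zero]
  have hprod : PowerSeries.mk 1 * ∏ i, evenSeries R * X ^ k i = ∏ o, F o := by
    simp [F, Fintype.prod_option]
  rw [hprod, coeff_prod, sum_congr rfl fun r _ => hcoeff r, sum_boole]

theorem toNat_half_add_toNat_half_sub {r : ℕ} {z : ℤ} (hz : z.natAbs ≤ r)
    (hr : Even (r - z.natAbs)) :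
    ((r + z) / 2).toNat + ((r - z) / 2).toNat = r ∧
      (((r + z) / 2).toNat : ℤ) - ((r - z) / 2).toNat = z := by
  grind

theorem card_displacement_eq_card_finsuppAntidiag (θ : ι → ℤ) (l : ℕ) :
    #{τ ∈ piAntidiag univ l | displacement τ = θ} =
      #{r ∈ finsuppAntidiag (univ : Finset (Option ι)) l |
        ∀ i, (θ i).natAbs ≤ r (some i) ∧ Even (r (some i) - (θ i).natAbs)} := by
  -- `r (some i)` is the number of steps along the `i`-th axis
  refine card_nbij' (fun τ => Finsupp.equivFunOnFinite.symm fun o =>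
    o.elim (τ none) fun i => τ (some (i, true)) + τ (some (i, false)))
    (fun r o => o.elim (r none) fun p =>
      ((r (some p.1) + if p.2 then θ p.1 else -θ p.1) / 2).toNat) ?_ ?_ ?_ ?_
  all_goals simp only [Set.MapsTo, Set.LeftInvOn, Set.RightInvOn, coe_filter, Set.mem_ofPred_eq,
    mem_piAntidiag_iff_displacement, mem_finsuppAntidiag, funext_iff]
  · rintro τ ⟨hτ, hθ⟩
    refine ⟨by simpa [Fintype.sum_option] using hτ, fun i => ?_⟩
    have := hθ i
    simp only [displacement, Finsupp.equivFunOnFinite_symm_apply_apply, Option.elim_some] at this ⊢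
    grind
  · rintro r ⟨⟨hr, -⟩, hP⟩
    have hhalf (i : ι) := toNat_half_add_toNat_half_sub (hP i).1 (hP i).2
    refine ⟨?_, fun i => ?_⟩
    · simpa [← sub_eq_add_neg, hhalf, Fintype.sum_option] using hr
    · simpa [displacement, ← sub_eq_add_neg] using (hhalf i).2
  · rintro τ ⟨-, hθ⟩ (_ | ⟨i, b⟩)
    · rfl
    · have := hθ i
      rw [displacement] at this
      cases b <;> simp only [Finsupp.equivFunOnFinite_symm_apply_apply, Option.elim_some, if_true,
        Bool.false_eq_true, if_false, Nat.cast_add] <;> omega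
  · rintro r ⟨-, hP⟩
    ext o
    rcases o with _ | i
    · rfl
    · simpa [← sub_eq_add_neg] using (toNat_half_add_toNat_half_sub (hP i).1 (hP i).2).1

variable (R) in
theorem card_displacement_eq (θ : ι → ℤ) (l : ℕ) :
    (#{τ ∈ piAntidiag univ l | displacement τ = θ} : R) =
      coeff l (PowerSeries.mk 1 * ∏ i, evenSeries R * X ^ (θ i).natAbs) := by
  rw [coeff_mk_one_mul_prod_evenSeries, card_displacement_eq_card_finsuppAntidiag]

theorem sum_add_displacement (A : (ι → ℤ) → R) (a : ι → ℕ) {l N : ℕ}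
    (hN : ∀ i, a i + l < N) :
    ∑ τ ∈ piAntidiag univ l, A ((fun i => (a i : ℤ)) + displacement τ) =
      coeff l (PowerSeries.mk 1 * ∑ c ∈ Fintype.piFinset (fun _ => Ico (-N : ℤ) N),
        (∏ i, evenSeries R * X ^ (c i - a i).natAbs) * C (A c)) := by
  have hmem {τ} (hτ : τ ∈ piAntidiag univ l) : (fun i => (a i : ℤ)) + displacement τ ∈
      Fintype.piFinset (fun _ => Ico (-N : ℤ) N) := by
    rw [Fintype.mem_piFinset]
    intro i
    have := abs_le.1 (abs_displacement_le hτ i)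
    have := hN i
    simp only [mem_Ico, Pi.add_apply]
    omega
  rw [← sum_fiberwise_of_maps_to fun τ hτ => hmem hτ, mul_sum, map_sum]
  refine sum_congr rfl fun c _ => ?_
  rw [← mul_assoc, coeff_mul_C, ← card_displacement_eq R fun i => c i - a i, ← nsmul_eq_mul,
    ← sum_const]
  have hc {τ : Option (ι × Bool) → ℕ} : (fun i => (a i : ℤ)) + displacement τ = c ↔
      displacement τ = fun i => c i - a i := eq_sub_iff_add_eq'.symm
  simp only [← hc]
  exact sum_congr rfl fun τ hτ => congrArg A (mem_filter.1 hτ).2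

end Displacement

section Pieri

open Finset PowerSeries

variable {ι R : Type*} [Fintype ι] [LinearOrder ι]

/-- The set counted by the Pieri number of type `B`, in terms of `ρ`-shifted weights: `a` and `c`
encode the two weights, `p.1` interlaces with both (so that no subtraction truncates), and `p.2`
says whether the short zero weight is used. -/
def pieriData (a c : ι → ℕ) (r : ℕ) : Finset ((ι → ℕ) × Bool) :=
  {p ∈ interlacing a c ×ˢ univ | (p.2 = true → ∀ i, p.1 i ≠ 0) ∧
    cond p.2 1 0 + ∑ i, (a i + c i - 2 * p.1 i) = r}

theorem mem_pieriData {a c : ι → ℕ} {r : ℕ} {p : (ι → ℕ) × Bool} :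
    p ∈ pieriData a c r ↔ p.1 ∈ interlacing a c ∧ (p.2 = true → ∀ i, p.1 i ≠ 0) ∧
      cond p.2 1 0 + ∑ i, (a i + c i - 2 * p.1 i) = r := by
  simp only [pieriData, mem_filter, mem_product, mem_univ, and_true]

variable [CommRing R] {A : (ι → ℤ) → R}

theorem sum_prod_evenSeries_mul_eq_sum_interlacing [IsAddTorsionFree R] (hA : IsAntisymmetric A)
    (hA' : ∀ ε c, A (reflect ε c) = (∏ i, if ε i then -1 else 1) * A c) {a : ι → ℕ}
    (ha : Monotone a) (N : ℕ) :
    ∑ c ∈ Fintype.piFinset (fun _ => Ico (-N : ℤ) N),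
        (∏ i, evenSeries R * X ^ (c i - a i).natAbs) * C (A c) =
      ∑ c ∈ Fintype.piFinset (fun _ => range N), ∑ d ∈ interlacing a c,
        (∏ i, wallWeight R (d i)) * X ^ (∑ i, (a i + c i - 2 * d i)) *
          C (A fun i => (c i : ℤ)) := by
  have := isAddTorsionFree_powerSeries R
  let E (d c : ι → ℕ) : R⟦X⟧ :=
    (∏ i, wallWeight R (d i)) * X ^ (∑ i, a i + ∑ i, c i - 2 * ∑ i, d i) *
      C (A fun i => (c i : ℤ))
  have hE {d c : ι → ℕ} (hd : ∀ i, d i ≤ min (a i) (c i)) : E d c =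
      (∏ i, wallWeight R (d i)) * X ^ (∑ i, (a i + c i - 2 * d i)) *
        C (A fun i => (c i : ℤ)) := by
    rw [sum_tsub_distrib _ fun i _ => by have := hd i; omega, sum_add_distrib, ← mul_sum]
  calc
    _ = ∑ c ∈ Fintype.piFinset (fun _ => range N),
          ∑ d ∈ Fintype.piFinset (fun i => range (min (a i) (c i) + 1)), E d c := by
      rw [sum_prod_mul_eq_sum_reflected (A := fun c => C (A c)) (fun ε c => ?_) N
        fun i z => evenSeries R * X ^ (z - a i).natAbs]
      · refine sum_congr rfl fun c _ => ?_
        simp only [evenSeries_mul_X_pow_sub_reflection, prod_univ_sum, sum_mul, prod_mul_distrib,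
          prod_pow_eq_pow_sum]
        refine sum_congr rfl fun d hd => (hE fun i => ?_).symm
        exact Nat.lt_succ_iff.1 (mem_range.1 (Fintype.mem_piFinset.1 hd i))
      · simp [hA', apply_ite (C (R := R))]
    _ = ∑ c ∈ Fintype.piFinset (fun _ => range N), ∑ d ∈ interlacing a c, E d c := by
      refine sum_le_min_eq_sum_interlacing ha N (fun d c i j => ?_) fun d c i j hij => ?_
      · simp only [E, Function.comp_apply, Equiv.sum_comp (Equiv.swap i j) d,
          Equiv.prod_comp (Equiv.swap i j) fun k => wallWeight R (d k)]
      · have hswap : A (fun k => (c (Equiv.swap i j k) : ℤ)) = -A fun k => (c k : ℤ) :=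
          hA (fun k => (c k : ℤ)) hij
        simp only [E, Function.comp_apply, Equiv.sum_comp (Equiv.swap i j) c, hswap, map_neg,
          mul_neg]
    _ = _ := sum_congr rfl fun c _ => sum_congr rfl fun d hd => hE fun i =>
      le_min_iff.2 ((mem_interlacing.1 hd).1 i)

theorem mk_one_mul_sum_interlacing {a c : ι → ℕ} (x : R) :
    PowerSeries.mk 1 * ∑ d ∈ interlacing a c,
        (∏ i, wallWeight R (d i)) * X ^ (∑ i, (a i + c i - 2 * d i)) * C x =
      evenSeries R * PowerSeries.mk fun r => #(pieriData a c r) • x := by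
  have hseries : (PowerSeries.mk fun r => #(pieriData a c r) • x) =
      ∑ d ∈ interlacing a c, (∑ b : Bool with b = true → ∀ i, d i ≠ 0, X ^ (cond b 1 0)) *
        X ^ (∑ i, (a i + c i - 2 * d i)) * C x := by
    ext r
    simp only [coeff_mk, map_sum, coeff_mul_C, sum_mul, ← pow_add, coeff_X_pow, ite_mul, one_mul,
      zero_mul, pieriData, ← sum_const, sum_filter, sum_product, ite_and, eq_comm (a := r),
      apply_ite (coeff r), map_zero]
  rw [hseries, mul_sum, mul_sum]
  refine sum_congr rfl fun d hd => ?_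
  have hw := mk_one_mul_prod_wallWeight R (strictMono_of_mem_interlacing hd).injective
  rw [← mul_assoc, ← mul_assoc, hw, mul_assoc _ _ (X ^ _), mul_assoc]

theorem sum_add_displacement_eq_sum_card_pieriData [IsAddTorsionFree R] (hA : IsAntisymmetric A)
    (hA' : ∀ ε c, A (reflect ε c) = (∏ i, if ε i then -1 else 1) * A c) {a : ι → ℕ}
    (ha : Monotone a) {l N : ℕ} (hN : ∀ i, a i + l < N) :
    ∑ τ ∈ piAntidiag univ l, A ((fun i => (a i : ℤ)) + displacement τ) =
      ∑ p ∈ range (l + 1) ×ˢ range (l + 1), if p.1 + 2 * p.2 = l then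
        ∑ c ∈ Fintype.piFinset (fun _ => range N), #(pieriData a c p.1) • A fun i => (c i : ℤ)
      else 0 := by
  rw [sum_add_displacement A a hN, sum_prod_evenSeries_mul_eq_sum_interlacing hA hA' ha, mul_sum]
  simp only [mk_one_mul_sum_interlacing, ← mul_sum, coeff_evenSeries_mul, map_sum, coeff_mk]

end Pieri

section Partition

open Finset PowerSeries

variable {ι κ M M' A : Type*} [Fintype ι] [DecidableEq ι] [Fintype κ] [DecidableEq κ]
  [AddCommMonoid M] [DecidableEq M] [AddCommMonoid M'] [DecidableEq M']

/-- The `q`-analogue of the partition function of a family of vectors `v`: the coefficient of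
`X ^ k` counts the ways to write `β` as a sum of `k` members of the family. -/
def partitionSeries (v : ι → M) (β : M) : ℤ⟦X⟧ :=
  PowerSeries.mk fun k => (#{f ∈ piAntidiag univ k | ∑ i, f i • v i = β} : ℤ)

theorem kostantQ_eq_partitionSeries {n : ℕ} (R : Finset (Fin n → ℚ)) (β : Fin n → ℚ) :
    kostantQ R β = partitionSeries (fun α : {α // α ∈ R} => α.1) β := by
  ext k
  simp only [kostantQ, partitionSeries, coeff_mk, Nat.cast_inj]
  exact Nat.subtype_card _ fun f => by simp [Nat.cast_smul_eq_nsmul]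

theorem partitionSeries_comp_equiv (e : ι ≃ κ) (v : κ → M) (β : M) :
    partitionSeries (v ∘ e) β = partitionSeries v β := by
  ext k
  simp only [partitionSeries, coeff_mk, Nat.cast_inj]
  refine card_equiv (e.arrowCongr (Equiv.refl ℕ)) fun f => ?_
  simp [← Equiv.sum_comp e]

theorem partitionSeries_comp_addMonoidHom {φ : M →+ M'} (hφ : Function.Injective φ) (v : ι → M)
    (β : M) : partitionSeries (φ ∘ v) (φ β) = partitionSeries v β := by
  simp only [partitionSeries, Function.comp_apply, ← map_nsmul, ← map_sum, hφ.eq_iff]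

variable [AddCommMonoidWithOne A] {ht : M →+ A} {v : ι ⊕ κ → M}

omit [DecidableEq ι] [DecidableEq κ] [DecidableEq M] in
theorem map_sum_smul_of_height_one (h₀ : ∀ i, ht (v (Sum.inl i)) = 0)
    (h₁ : ∀ j, ht (v (Sum.inr j)) = 1) (f : ι ⊕ κ → ℕ) :
    ht (∑ i, f i • v i) = (∑ j, f (Sum.inr j) : ℕ) := by
  simp [h₀, h₁]

theorem partitionSeries_eq_zero (h₀ : ∀ i, ht (v (Sum.inl i)) = 0)
    (h₁ : ∀ j, ht (v (Sum.inr j)) = 1) {β : M} (hβ : ∀ l : ℕ, ht β ≠ l) :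
    partitionSeries v β = 0 := by
  ext k
  simp only [partitionSeries, coeff_mk, map_zero, Nat.cast_eq_zero, card_eq_zero]
  refine filter_eq_empty_iff.2 fun f _ hf => hβ (∑ j, f (Sum.inr j)) ?_
  rw [← hf, map_sum_smul_of_height_one h₀ h₁]

theorem card_filter_piAntidiag_of_height_eq {M : Type*} [AddCommGroup M] [DecidableEq M]
    [CharZero A] {ht : M →+ A} {v : ι ⊕ κ → M} (h₀ : ∀ i, ht (v (Sum.inl i)) = 0)
    (h₁ : ∀ j, ht (v (Sum.inr j)) = 1) {β : M} {l : ℕ} (hβ : ht β = l) (k : ℕ) :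
    #{f ∈ piAntidiag univ (k + l) | ∑ i, f i • v i = β} =
      ∑ τ ∈ piAntidiag univ l,
        #{f ∈ piAntidiag univ k | ∑ i, f i • v (Sum.inl i) = β - ∑ j, τ j • v (Sum.inr j)} := by
  rw [← card_sigma]
  refine card_nbij' (fun f => ⟨f ∘ Sum.inr, f ∘ Sum.inl⟩) (fun p => Sum.elim p.2 p.1) ?_ ?_ ?_ ?_
  · intro f hf
    obtain ⟨hfk, hfβ⟩ := mem_filter.1 (mem_coe.1 hf)
    have hfl : ∑ j, f (Sum.inr j) = l := by
      rw [← Nat.cast_inj (R := A), ← hβ, ← hfβ, map_sum_smul_of_height_one h₀ h₁]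
    simp only [mem_piAntidiag, Fintype.sum_sum_type] at hfk hfβ
    simp only [mem_coe, mem_sigma, mem_filter, mem_piAntidiag, Function.comp_apply,
      eq_sub_iff_add_eq]
    exact ⟨⟨hfl, by simp⟩, ⟨by omega, by simp⟩, hfβ⟩
  · rintro ⟨τ, f⟩ h
    simp only [mem_coe, mem_sigma, mem_filter, mem_piAntidiag, eq_sub_iff_add_eq] at h
    simp only [mem_coe, mem_filter, mem_piAntidiag, Fintype.sum_sum_type, Sum.elim_inl,
      Sum.elim_inr]
    obtain ⟨⟨hτ, -⟩, ⟨hf, -⟩, hβ⟩ := h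
    exact ⟨⟨by rw [hτ, hf], by simp⟩, hβ⟩
  · rintro f -
    exact Sum.elim_comp_inl_inr f
  · rintro ⟨τ, f⟩ -
    rfl

theorem partitionSeries_eq_X_pow_mul_sum {M : Type*} [AddCommGroup M] [DecidableEq M] [CharZero A]
    {ht : M →+ A} {v : ι ⊕ κ → M} (h₀ : ∀ i, ht (v (Sum.inl i)) = 0)
    (h₁ : ∀ j, ht (v (Sum.inr j)) = 1) {β : M} {l : ℕ} (hβ : ht β = l) :
    partitionSeries v β = X ^ l * ∑ τ ∈ piAntidiag univ l,
      partitionSeries (v ∘ Sum.inl) (β - ∑ j, τ j • v (Sum.inr j)) := by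
  ext k
  rw [coeff_X_pow_mul']
  simp only [partitionSeries, coeff_mk, map_sum]
  split_ifs with hk
  · obtain ⟨k, rfl⟩ := Nat.exists_eq_add_of_le' hk
    rw [card_filter_piAntidiag_of_height_eq h₀ h₁ hβ, Nat.cast_sum, Nat.add_sub_cancel]
    rfl
  · rw [Nat.cast_eq_zero, card_eq_zero]
    refine filter_eq_empty_iff.2 fun f hfk hf => hk ?_
    have hfl : ∑ j, f (Sum.inr j) = l := by
      rw [← Nat.cast_inj (R := A), ← hβ, ← hf, map_sum_smul_of_height_one h₀ h₁]
    rw [← hfl, ← (mem_piAntidiag.1 hfk).1, Fintype.sum_sum_type]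
    exact Nat.le_add_left _ _

end Partition

section Roots

open Finset PowerSeries

variable {m : ℕ}

theorem mem_rootsB {n : ℕ} {α : Fin n → ℚ} : α ∈ rootsB n ↔
    (∃ i j, j < i ∧ ∃ b : Bool, α = Pi.single i 1 + Pi.single j (if b then 1 else -1)) ∨
      ∃ i, α = Pi.single i 1 := by
  simp only [rootsB, rootsD, mem_union, mem_image, mem_filter, mem_univ, true_and, Prod.exists,
    Bool.exists_bool, Bool.false_eq_true, if_false, if_true, Pi.single_neg, ← sub_eq_add_neg,
    and_or_left, exists_or, eq_comm (a := α)]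

/-- Extension of a weight by a top coordinate `0`. -/
def snocZero (m : ℕ) : (Fin m → ℚ) →+ (Fin (m + 1) → ℚ) where
  toFun β := Fin.snoc β 0
  map_zero' := by
    ext i
    cases i using Fin.lastCases <;> simp
  map_add' β γ := by
    ext i
    cases i using Fin.lastCases <;> simp

theorem snocZero_injective : Function.Injective (snocZero m) := fun _ _ h =>
  (Fin.snoc_injective2 (α := fun _ => ℚ) h).1

theorem snocZero_last (β : Fin m → ℚ) : snocZero m β (Fin.last m) = 0 :=
  Fin.snoc_last (α := fun _ => ℚ) _ _

theorem snocZero_castSucc (β : Fin m → ℚ) (i : Fin m) : snocZero m β i.castSucc = β i :=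
  Fin.snoc_castSucc (α := fun _ => ℚ) _ _ _

theorem snocZero_single (i : Fin m) (c : ℚ) :
    snocZero m (Pi.single i c) = Pi.single i.castSucc c := by
  ext k
  cases k using Fin.lastCases <;> simp [snocZero, Pi.single_apply, (Fin.castSucc_ne_last _).symm]

/-- The positive roots of type `B` of rank `m + 1` which do not come from rank `m`: they are
`e_{m+1}` and `e_{m+1} ± e_j`. -/
def topRoot (o : Option (Fin m × Bool)) : Fin (m + 1) → ℚ :=
  Pi.single (Fin.last m) 1 + o.elim 0 fun p => Pi.single p.1.castSucc (if p.2 then 1 else -1)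

theorem mem_rootsB_succ {α : Fin (m + 1) → ℚ} :
    α ∈ rootsB (m + 1) ↔ (∃ β ∈ rootsB m, snocZero m β = α) ∨ ∃ o, topRoot o = α := by
  constructor
  · rw [mem_rootsB]
    rintro (⟨i, j, hij, b, rfl⟩ | ⟨i, rfl⟩)
    · obtain ⟨j, rfl⟩ := Fin.exists_castSucc_eq.2 (hij.trans_le (Fin.le_last i)).ne
      cases i using Fin.lastCases with
      | last => exact Or.inr ⟨some (j, b), rfl⟩
      | cast i =>
        exact Or.inl ⟨_, mem_rootsB.2 (Or.inl ⟨i, j, hij, b, rfl⟩), by simp [snocZero_single]⟩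
    · cases i using Fin.lastCases with
      | last => exact Or.inr ⟨none, add_zero _⟩
      | cast i => exact Or.inl ⟨_, mem_rootsB.2 (Or.inr ⟨i, rfl⟩), snocZero_single i 1⟩
  · rintro (⟨β, hβ, rfl⟩ | ⟨_ | ⟨j, b⟩, rfl⟩)
    · rcases mem_rootsB.1 hβ with ⟨i, j, hij, b, rfl⟩ | ⟨i, rfl⟩
      · exact mem_rootsB.2 (Or.inl ⟨i.castSucc, j.castSucc, hij, b, by simp [snocZero_single]⟩)
      · exact mem_rootsB.2 (Or.inr ⟨i.castSucc, snocZero_single i 1⟩)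
    · exact mem_rootsB.2 (Or.inr ⟨Fin.last m, add_zero _⟩)
    · exact mem_rootsB.2 (Or.inl ⟨Fin.last m, j.castSucc, Fin.castSucc_lt_last j, b, rfl⟩)

theorem topRoot_last (o : Option (Fin m × Bool)) : topRoot o (Fin.last m) = 1 := by
  rcases o with _ | ⟨j, b⟩ <;> simp [topRoot, Fin.castSucc_ne_last]

theorem topRoot_injective : Function.Injective (topRoot (m := m)) := by
  refine (add_right_injective _).comp fun o p h => ?_
  rcases o with _ | ⟨i, b⟩ <;> rcases p with _ | ⟨j, c⟩
  · rfl
  · have := congrFun h j.castSucc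
    cases c <;> simp at this
  · have := congrFun h i.castSucc
    cases b <;> simp at this
  · have := congrFun h i.castSucc
    simp only [Option.elim_some, Pi.single_apply] at this
    grind

theorem init_sum_topRoot (τ : Option (Fin m × Bool) → ℕ) :
    Fin.init (∑ j, τ j • topRoot j) = fun i => (displacement τ i : ℚ) := by
  ext i
  simp [Fin.init, Fintype.sum_option, topRoot, Fintype.sum_prod_type, displacement, Pi.single_apply,
    sub_eq_add_neg]

/-- The positive roots of rank `m + 1`, split into those of rank `m` and the new ones. -/
def rootsBSum (m : ℕ) : {α // α ∈ rootsB m} ⊕ Option (Fin m × Bool) → {α // α ∈ rootsB (m + 1)} :=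
  Sum.elim (fun β => ⟨snocZero m β, mem_rootsB_succ.2 (Or.inl ⟨β, β.2, rfl⟩)⟩)
    fun o => ⟨topRoot o, mem_rootsB_succ.2 (Or.inr ⟨o, rfl⟩)⟩

theorem rootsBSum_bijective : Function.Bijective (rootsBSum m) := by
  refine ⟨Function.Injective.sumElim
    (fun β γ h => Subtype.ext (snocZero_injective (congrArg Subtype.val h)))
    (fun o p h => topRoot_injective (congrArg Subtype.val h)) fun β o h => ?_, fun ⟨α, hα⟩ => ?_⟩
  · have := congrFun (congrArg Subtype.val h) (Fin.last m)
    simp [topRoot_last, snocZero_last] at this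
  · rcases mem_rootsB_succ.1 hα with ⟨β, hβ, rfl⟩ | ⟨o, rfl⟩
    · exact ⟨Sum.inl ⟨β, hβ⟩, rfl⟩
    · exact ⟨Sum.inr o, rfl⟩

theorem kostantQ_rootsB_succ_eq_partitionSeries (β : Fin (m + 1) → ℚ) :
    kostantQ (rootsB (m + 1)) β =
      partitionSeries (Sum.elim (fun α : {α // α ∈ rootsB m} => snocZero m α.1) topRoot) β := by
  have : Sum.elim (fun α : {α // α ∈ rootsB m} => snocZero m α.1) topRoot =
      (fun α : {α // α ∈ rootsB (m + 1)} => α.1) ∘ Equiv.ofBijective _ rootsBSum_bijective := by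
    ext (α | o) : 1 <;> rfl
  rw [kostantQ_eq_partitionSeries, this, partitionSeries_comp_equiv]

theorem kostantQ_rootsB_succ_eq_zero {β : Fin (m + 1) → ℚ} (hβ : β (Fin.last m) < 0) :
    kostantQ (rootsB (m + 1)) β = 0 := by
  rw [kostantQ_rootsB_succ_eq_partitionSeries]
  exact partitionSeries_eq_zero (ht := Pi.evalAddMonoidHom _ (Fin.last m))
    (fun α => snocZero_last α.1) topRoot_last fun l => (hβ.trans_le l.cast_nonneg).ne

theorem kostantQ_rootsB_succ {β : Fin (m + 1) → ℚ} {l : ℕ} (hβ : β (Fin.last m) = l) :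
    kostantQ (rootsB (m + 1)) β = X ^ l * ∑ τ ∈ piAntidiag univ l,
      kostantQ (rootsB m) (Fin.init β - fun i => (displacement τ i : ℚ)) := by
  rw [kostantQ_rootsB_succ_eq_partitionSeries,
    partitionSeries_eq_X_pow_mul_sum (ht := Pi.evalAddMonoidHom _ (Fin.last m))
      (fun α => snocZero_last α.1) topRoot_last hβ]
  refine congrArg (X ^ l * ·) (sum_congr rfl fun τ hτ => ?_)
  have : snocZero m (Fin.init β - fun i => (displacement τ i : ℚ)) =
      β - ∑ o, τ o • topRoot o := by
    have hlast : (∑ o, τ o • topRoot o) (Fin.last m) = β (Fin.last m) := by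
      simp_rw [Finset.sum_apply, Pi.smul_apply, topRoot_last, nsmul_one, hβ,
        ← (mem_piAntidiag.1 hτ).1, Nat.cast_sum]
    rw [← init_sum_topRoot]
    ext i
    cases i using Fin.lastCases with
    | last => rw [snocZero_last, Pi.sub_apply, hlast, sub_self]
    | cast i => exact snocZero_castSucc _ i
  rw [kostantQ_eq_partitionSeries, ← partitionSeries_comp_addMonoidHom
    (snocZero_injective (m := m)) (fun α : {α // α ∈ rootsB m} => α.1), this]
  rfl

end Roots

section Weyl

open Finset

variable {m n : ℕ}

/-- The extension of a permutation of `Fin m` to `Fin (m + 1)` by fixing the last element. -/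
def extendLast (σ : Equiv.Perm (Fin m)) : Equiv.Perm (Fin (m + 1)) :=
  finSuccEquivLast.symm.permCongr σ.optionCongr

theorem extendLast_castSucc (σ : Equiv.Perm (Fin m)) (i : Fin m) :
    extendLast σ i.castSucc = (σ i).castSucc := by
  simp [extendLast, Equiv.permCongr_apply]

theorem extendLast_last (σ : Equiv.Perm (Fin m)) : extendLast σ (Fin.last m) = Fin.last m := by
  simp [extendLast, Equiv.permCongr_apply]

theorem extendLast_inv (σ : Equiv.Perm (Fin m)) : (extendLast σ)⁻¹ = extendLast σ⁻¹ :=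
  rfl

theorem extendLast_injective : Function.Injective (extendLast (m := m)) :=
  finSuccEquivLast.symm.permCongr.injective.comp Equiv.optionCongr_injective

theorem exists_extendLast_eq {σ : Equiv.Perm (Fin (m + 1))} (h : σ (Fin.last m) = Fin.last m) :
    ∃ τ, extendLast τ = σ := by
  refine ⟨Equiv.removeNone (finSuccEquivLast.permCongr σ), ?_⟩
  have hnone : finSuccEquivLast.permCongr σ none = none := by
    simp [Equiv.permCongr_apply, h]
  rw [extendLast, map_equiv_removeNone, hnone, Equiv.swap_self]
  exact finSuccEquivLast.permCongr.symm_apply_apply σ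

theorem sign_extendLast (σ : Equiv.Perm (Fin m)) :
    Equiv.Perm.sign (extendLast σ) = Equiv.Perm.sign σ := by
  rw [extendLast, Equiv.Perm.sign_permCongr, Equiv.optionCongr_sign]

theorem sum_signedPerm_eq_sum_extendLast {M : Type*} [AddCommMonoid M]
    {F : Equiv.Perm (Fin (m + 1)) → (Fin (m + 1) → Bool) → M}
    (hF : ∀ σ ε, F σ ε ≠ 0 → σ (Fin.last m) = Fin.last m ∧ ε (Fin.last m) = false) :
    ∑ σ, ∑ ε, F σ ε = ∑ σ, ∑ ε, F (extendLast σ) (Fin.snoc (α := fun _ => Bool) ε false) := by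
  simp only [← Fintype.sum_prod_type']
  symm
  refine Fintype.sum_of_injective
    (Prod.map extendLast fun ε => Fin.snoc (α := fun _ => Bool) ε false)
    (extendLast_injective.prodMap fun _ _ h => (Fin.snoc_injective2 (α := fun _ => Bool) h).1)
    _ _ (fun ⟨σ, ε⟩ hp => ?_) fun _ => rfl
  by_contra h
  obtain ⟨hσ, hε⟩ := hF σ ε h
  obtain ⟨σ, rfl⟩ := exists_extendLast_eq hσ
  refine hp ⟨(σ, Fin.init ε), Prod.ext rfl ?_⟩
  simp only [Prod.map_apply, ← hε, Fin.snoc_init_self]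

theorem wAct_add (σ : Equiv.Perm (Fin n)) (ε : Fin n → Bool) (x y : Fin n → ℚ) :
    wAct σ ε (x + y) = wAct σ ε x + wAct σ ε y :=
  funext fun _ => mul_add _ _ _

theorem wAct_not (σ : Equiv.Perm (Fin n)) (ε : Fin n → Bool) (x : Fin n → ℚ) :
    wAct σ (fun i => !ε i) x = -wAct σ ε x := by
  ext i
  cases h : ε i <;> simp [wAct, h]

theorem init_wAct_extendLast (σ : Equiv.Perm (Fin m)) (ε : Fin m → Bool) (x : Fin (m + 1) → ℚ) :
    Fin.init (wAct (extendLast σ) (Fin.snoc (α := fun _ => Bool) ε false) x) =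
      wAct σ ε (Fin.init x) := by
  ext i
  simp [Fin.init, wAct, extendLast_inv, extendLast_castSucc]

theorem wAct_extendLast_last (σ : Equiv.Perm (Fin m)) (ε : Fin m → Bool) (x : Fin (m + 1) → ℚ) :
    wAct (extendLast σ) (Fin.snoc (α := fun _ => Bool) ε false) x (Fin.last m) =
      x (Fin.last m) := by
  simp [wAct, extendLast_inv, extendLast_last]

theorem wDet_extendLast (σ : Equiv.Perm (Fin m)) (ε : Fin m → Bool) :
    wDet (extendLast σ) (Fin.snoc (α := fun _ => Bool) ε false) = wDet σ ε := by
  simp [wDet, sign_extendLast, Fin.prod_univ_castSucc]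

theorem fixes_last_of_le_wAct_last {σ : Equiv.Perm (Fin (m + 1))} {ε : Fin (m + 1) → Bool}
    {x : Fin (m + 1) → ℚ} {t : ℚ} (hx : ∀ i : Fin m, x i.castSucc < t) (hneg : ∀ i, -x i < t)
    (h : t ≤ wAct σ ε x (Fin.last m)) : σ (Fin.last m) = Fin.last m ∧ ε (Fin.last m) = false := by
  have hε : ε (Fin.last m) = false := by
    by_contra hε
    rw [wAct, if_pos (by simpa using hε), neg_one_mul] at h
    exact (hneg _).not_ge h
  refine ⟨Equiv.Perm.eq_inv_iff_eq.1 ?_, hε⟩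
  rw [wAct, hε, if_neg Bool.false_ne_true, one_mul] at h
  by_contra hσ
  obtain ⟨i, hi⟩ := Fin.exists_castSucc_eq.2 (Ne.symm hσ)
  exact (hx i).not_ge (hi ▸ h)

theorem sum_wAct_displacement {M : Type*} [AddCommMonoid M] (σ : Equiv.Perm (Fin n))
    (ε : Fin n → Bool) (l : ℕ) (f : (Fin n → ℚ) → M) :
    ∑ τ ∈ piAntidiag univ l, f (wAct σ ε fun i => (displacement τ i : ℚ)) =
      ∑ τ ∈ piAntidiag univ l, f fun i => (displacement τ i : ℚ) := by
  let e : Option (Fin n × Bool) ≃ Option (Fin n × Bool) :=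
    (σ⁻¹.prodShear fun i => if ε i then Equiv.boolNot else Equiv.refl Bool).optionCongr
  refine sum_equiv (e.symm.arrowCongr (Equiv.refl ℕ)) (fun τ => ?_) fun τ _ => ?_
  · rw [mem_piAntidiag, mem_piAntidiag]
    exact and_congr (iff_of_eq (congrArg (· = l) (Equiv.sum_comp e τ).symm)) (by simp)
  · congr 1
    ext i
    cases h : ε i <;> simp [e, wAct, displacement, h]

theorem sum_wAct_sub_displacement {M : Type*} [AddCommMonoid M] (σ : Equiv.Perm (Fin n))
    (ε : Fin n → Bool) (x : Fin n → ℚ) (l : ℕ) (f : (Fin n → ℚ) → M) :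
    ∑ τ ∈ piAntidiag univ l, f (wAct σ ε x - fun i => (displacement τ i : ℚ)) =
      ∑ τ ∈ piAntidiag univ l, f (wAct σ ε (x + fun i => (displacement τ i : ℚ))) := by
  simp only [← sum_wAct_displacement σ (fun i => !ε i) l fun y => f (wAct σ ε x - y), wAct_not,
    sub_neg_eq_add, wAct_add]

variable {M : Type*} [AddCommGroup M]

/-- The alternating sum of a function over the orbit of `x` under the Weyl group of type `B`. -/
def weylAlternant (Φ : (Fin n → ℚ) → M) (x : Fin n → ℚ) : M :=
  ∑ σ : Equiv.Perm (Fin n), ∑ ε : Fin n → Bool, wDet σ ε • Φ (wAct σ ε x)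

theorem weylAlternant_comp_perm (Φ : (Fin n → ℚ) → M) (x : Fin n → ℚ) (π : Equiv.Perm (Fin n)) :
    weylAlternant Φ (x ∘ π) = (Equiv.Perm.sign π : ℤ) • weylAlternant Φ x := by
  simp only [weylAlternant, smul_sum, smul_smul]
  rw [← Equiv.sum_comp (Equiv.mulRight π)]
  refine sum_congr rfl fun σ _ => sum_congr rfl fun ε _ => congrArg₂ _ ?_ (congrArg Φ ?_)
  · simp only [wDet, Equiv.coe_mulRight, Equiv.Perm.sign_mul, Units.val_mul]
    ring
  · ext i
    simp [wAct]

theorem weylAlternant_flip (Φ : (Fin n → ℚ) → M) (x : Fin n → ℚ) (η : Fin n → Bool) :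
    weylAlternant Φ (fun i => (if η i then -1 else 1) * x i) =
      (∏ i, if η i then (-1 : ℤ) else 1) • weylAlternant Φ x := by
  simp only [weylAlternant, smul_sum, smul_smul]
  refine sum_congr rfl fun σ _ => ?_
  have hinv : Function.Involutive fun (ε : Fin n → Bool) i => ε i ^^ η (σ⁻¹ i) := fun ε => by
    simp
  have hsign (b c : Bool) :
      (if b ^^ c then (-1 : ℤ) else 1) = (if b then -1 else 1) * if c then -1 else 1 := by
    cases b <;> cases c <;> rfl
  rw [← hinv.bijective.sum_comp]
  refine sum_congr rfl fun ε _ => congrArg₂ _ ?_ (congrArg Φ ?_)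
  · rw [← Equiv.prod_comp σ⁻¹ fun i => if η i then (-1 : ℤ) else 1]
    simp only [wDet, hsign, prod_mul_distrib]
    ring
  · ext i
    have hflip (b c : Bool) (t : ℚ) :
        (if b ^^ c then -1 else 1) * ((if c then -1 else 1) * t) = (if b then -1 else 1) * t := by
      cases b <;> cases c <;> simp
    exact hflip _ _ _

theorem KB_eq_weylAlternant (lam mu : Fin n → ℚ) : KB n lam mu =
    weylAlternant (fun y => kostantQ (rootsB n) (y - (mu + rhoB n))) (lam + rhoB n) :=
  rfl

theorem weylAlternant_kostantQ_rootsB_succ {x y : Fin (m + 1) → ℚ} {l : ℕ}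
    (hx : ∀ i : Fin m, x i.castSucc < y (Fin.last m)) (hneg : ∀ i, -x i < y (Fin.last m))
    (hl : x (Fin.last m) - y (Fin.last m) = l) :
    weylAlternant (fun z => kostantQ (rootsB (m + 1)) (z - y)) x =
      PowerSeries.X ^ l * ∑ τ ∈ piAntidiag univ l,
        weylAlternant (fun z => kostantQ (rootsB m) (z - Fin.init y))
          (Fin.init x + fun i => (displacement τ i : ℚ)) := by
  have hfix (σ : Equiv.Perm (Fin (m + 1))) (ε : Fin (m + 1) → Bool)
      (h : wDet σ ε • kostantQ (rootsB (m + 1)) (wAct σ ε x - y) ≠ 0) :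
      σ (Fin.last m) = Fin.last m ∧ ε (Fin.last m) = false := by
    refine fixes_last_of_le_wAct_last hx hneg ?_
    contrapose! h
    rw [kostantQ_rootsB_succ_eq_zero (sub_neg.2 h), smul_zero]
  have hterm (σ : Equiv.Perm (Fin m)) (ε : Fin m → Bool) :
      kostantQ (rootsB (m + 1))
          (wAct (extendLast σ) (Fin.snoc (α := fun _ => Bool) ε false) x - y) =
        PowerSeries.X ^ l * ∑ τ ∈ piAntidiag univ l, kostantQ (rootsB m)
          (wAct σ ε (Fin.init x + fun i => (displacement τ i : ℚ)) - Fin.init y) := by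
    rw [← sum_wAct_sub_displacement σ ε _ l fun z => kostantQ (rootsB m) (z - Fin.init y),
      kostantQ_rootsB_succ (by rw [Pi.sub_apply, wAct_extendLast_last, hl])]
    have hsub (u : Fin (m + 1) → ℚ) : (Fin.init (u - y) : Fin m → ℚ) = Fin.init u - Fin.init y :=
      rfl
    simp only [hsub, init_wAct_extendLast, sub_right_comm]
  rw [weylAlternant, sum_signedPerm_eq_sum_extendLast hfix]
  simp only [hterm, wDet_extendLast, ← mul_smul_comm, ← mul_sum, smul_sum, weylAlternant]
  exact congrArg _ ((sum_congr rfl fun σ _ => sum_comm).trans sum_comm)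

end Weyl

section Shift

open Finset

variable {m : ℕ}

/-- The integral weight `λ` such that `λ + ρ` has coordinates `c i + 1 / 2`. -/
def shift (c : Fin m → ℕ) : Fin m → ℚ := fun i => (c i : ℚ) - (i : ℕ)

theorem shift_add_rhoB (c : Fin m → ℕ) : shift c + rhoB m = fun i => (c i : ℚ) + 1 / 2 := by
  ext i
  simp only [shift, rhoB, Pi.add_apply]
  ring

theorem shift_injective : Function.Injective (shift (m := m)) := fun _ _ h => funext fun i =>
  Nat.cast_injective (sub_left_injective (congrFun h i))

theorem val_sub_val_le_of_strictMono {c : Fin m → ℕ} (hc : StrictMono c) (i j : Fin m) :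
    (j : ℕ) - i ≤ c j - c i := by
  simpa using card_le_card_of_injOn (s := Ioc i j) (t := Ioc (c i) (c j)) c
    (by simpa using hc.mapsTo_Ioc) hc.injective.injOn

theorem val_le_of_strictMono {c : Fin m → ℕ} (hc : StrictMono c) (i : Fin m) : (i : ℕ) ≤ c i := by
  simpa using card_le_card_of_injOn (s := Iio i) (t := Iio (c i)) c
    (by simpa using hc.mapsTo_Iio) hc.injective.injOn

theorem setOf_dominantB_integral_eq_image_shift :
    {lam : Fin m → ℚ | DominantB lam ∧ ∀ i, ∃ z : ℤ, lam i = z} = shift '' {c | StrictMono c} := by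
  ext lam
  constructor
  · rintro ⟨⟨hmono, hnonneg, -⟩, hz⟩
    choose z hz using hz
    obtain rfl : lam = fun i => (z i : ℚ) := funext hz
    lift z to Fin m → ℕ using fun i => Int.cast_nonneg_iff.1 (hnonneg i)
    refine ⟨fun i => z i + i, fun i j hij => ?_, ?_⟩
    · exact add_lt_add_of_le_of_lt (by simpa using hmono hij.le) hij
    · ext i
      simp [shift]
  · rintro ⟨c, hc, rfl⟩
    have hz (i : Fin m) : ∃ z : ℤ, shift c i = z := ⟨c i - (i : ℕ), by simp [shift]⟩
    refine ⟨⟨fun i j hij => ?_, fun i => ?_, Or.inl hz⟩, hz⟩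
    · have hle := val_sub_val_le_of_strictMono hc i j
      have hcij := hc.monotone hij
      have : c i + j ≤ c j + i := by omega
      rw [shift, shift, sub_le_sub_iff]
      exact_mod_cast this
    · exact sub_nonneg.2 (Nat.cast_le.2 (val_le_of_strictMono hc i))

theorem mem_interlacing_iff_succ {a c d : Fin m → ℕ} :
    d ∈ interlacing a c ↔ (∀ i, d i ≤ a i ∧ d i ≤ c i) ∧
      ∀ (i : Fin m) (h : (i : ℕ) + 1 < m), a i < d ⟨i + 1, h⟩ ∧ c i < d ⟨i + 1, h⟩ := by
  rw [mem_interlacing]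
  refine and_congr_right fun hle => ⟨fun h i hi => h i _ (Nat.lt_succ_self i), fun h i j hij => ?_⟩
  have hd : Monotone d := by
    cases m with
    | zero => exact fun i => i.elim0
    | succ m =>
      exact Fin.monotone_iff_le_succ.2 fun i => (hle i.castSucc).1.trans
        (h i.castSucc (Nat.succ_lt_succ i.2)).1.le
  have hi : (i : ℕ) + 1 < m := (Nat.succ_le_of_lt hij).trans_lt j.2
  have hdij : d ⟨i + 1, hi⟩ ≤ d j := hd hij
  exact (h i hi).imp hdij.trans_lt' hdij.trans_lt'

/-- The condition on `t = (k, k̄, k₀)` in the definition of the Pieri number of type `B`. -/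
def IsPieriDatum (γ lam : Fin m → ℚ) (r : ℕ) (t : (Fin m → ℕ) × (Fin m → ℕ) × Bool) : Prop :=
  ((cond t.2.2 1 0) + ∑ i, (t.1 i + t.2.1 i)) = r ∧
    (∀ i, ((t.2.1 i : ℚ) - (t.1 i : ℚ)) = lam i - γ i) ∧
    (∀ i : Fin m, ∀ h : (i : ℕ) + 1 < m,
      lam i ≤ lam ⟨(i : ℕ) + 1, h⟩ - (t.2.1 ⟨(i : ℕ) + 1, h⟩ : ℚ)) ∧
    (∀ i : Fin m, ∀ h : (i : ℕ) + 1 < m,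
      lam i + (t.1 i : ℚ) - (t.2.1 i : ℚ) ≤
        lam ⟨(i : ℕ) + 1, h⟩ - (t.2.1 ⟨(i : ℕ) + 1, h⟩ : ℚ)) ∧
    (∀ h : 0 < m,
      if t.2.2 then (0 : ℚ) < lam ⟨0, h⟩ - (t.2.1 ⟨0, h⟩ : ℚ)
      else (0 : ℚ) ≤ lam ⟨0, h⟩ - (t.2.1 ⟨0, h⟩ : ℚ))

theorem isPieriDatum_shift_iff {a c d : Fin m → ℕ} {b : Bool} {r : ℕ} (ha : ∀ i, d i ≤ a i)
    (hc : ∀ i, d i ≤ c i) :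
    IsPieriDatum (shift a) (shift c) r (fun i => a i - d i, fun i => c i - d i, b) ↔
      (d, b) ∈ pieriData a c r := by
  have hlt (u v i : ℕ) : (u : ℚ) - i ≤ v - (i + 1 : ℕ) ↔ u < v := by
    rw [← Nat.add_one_le_iff, ← Nat.cast_le (α := ℚ), sub_le_sub_iff]
    push_cast
    constructor <;> intro h <;> linarith
  have hdiff (i : Fin m) : (c i : ℚ) - d i - (a i - d i) = shift c i - shift a i := by
    simp only [shift]
    ring
  have hlam (i : Fin m) : shift c i + (a i - d i) - (c i - d i) = a i - (i : ℕ) := by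
    simp only [shift]
    ring
  have hd (i : Fin m) : shift c i - (c i - d i) = d i - (i : ℕ) := by
    simp only [shift]
    ring
  have hsum : ∑ i, (a i - d i + (c i - d i)) = ∑ i, (a i + c i - 2 * d i) :=
    sum_congr rfl fun i _ => by have := ha i; have := hc i; omega
  have hpos (hint : d ∈ interlacing a c) :
      (b = true → ∀ i, d i ≠ 0) ↔ ∀ h : 0 < m, b = true → 0 < d ⟨0, h⟩ := by
    refine ⟨fun h hm hb => Nat.pos_of_ne_zero (h hb _), fun h hb i => ?_⟩
    have : d ⟨0, i.pos⟩ ≤ d i := (strictMono_of_mem_interlacing hint).monotone (Nat.zero_le _)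
    exact ((h i.pos hb).trans_le this).ne'
  have hif (h : 0 < m) : (if b then (0 : ℚ) < d ⟨0, h⟩ else (0 : ℚ) ≤ d ⟨0, h⟩) ↔
      (b = true → 0 < d ⟨0, h⟩) := by
    cases b <;> simp
  rw [mem_pieriData, and_congr_right fun hint => and_congr_left' (hpos hint),
    mem_interlacing_iff_succ]
  simp only [IsPieriDatum, Nat.cast_sub (ha _), Nat.cast_sub (hc _), hdiff, hlam, hd]
  simp only [shift, hlt, hsum, Nat.cast_zero, sub_zero, hif, ha, hc, forall_and]
  tauto

theorem IsPieriDatum.le_right {a c x y : Fin m → ℕ} {b : Bool} {r : ℕ}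
    (h : IsPieriDatum (shift a) (shift c) r (x, y, b)) (i : Fin m) : y i ≤ c i := by
  obtain ⟨-, -, hstep, -, hzero⟩ := h
  rcases i with ⟨_ | i, hi⟩
  · have : (0 : ℚ) ≤ shift c ⟨0, hi⟩ - y ⟨0, hi⟩ := by
      have := hzero hi
      split_ifs at this
      exacts [this.le, this]
    simpa [shift] using this
  · have hle := hstep ⟨i, Nat.lt_of_succ_lt hi⟩ hi
    rw [← Nat.cast_le (α := ℚ)]
    simp only [shift] at hle
    push_cast at hle
    linarith

theorem IsPieriDatum.add_eq_add {a c x y : Fin m → ℕ} {b : Bool} {r : ℕ}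
    (h : IsPieriDatum (shift a) (shift c) r (x, y, b)) (i : Fin m) : y i + a i = c i + x i := by
  have := h.2.1 i
  simp only [shift] at this
  rw [← Nat.cast_inj (R := ℚ)]
  push_cast
  linarith

theorem bPieri_shift (a c : Fin m → ℕ) (r : ℕ) :
    bPieri (shift a) (shift c) r = #(pieriData a c r) := by
  let φ (p : (Fin m → ℕ) × Bool) : (Fin m → ℕ) × (Fin m → ℕ) × Bool :=
    (fun i => a i - p.1 i, fun i => c i - p.1 i, p.2)
  have hle {p : (Fin m → ℕ) × Bool} (hp : p ∈ pieriData a c r) :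
      (∀ i, p.1 i ≤ a i) ∧ ∀ i, p.1 i ≤ c i :=
    forall_and.1 (mem_interlacing.1 (mem_pieriData.1 hp).1).1
  have hφ : Set.InjOn φ (pieriData a c r) := by
    intro p hp q hq h
    simp only [φ, Prod.mk.injEq, funext_iff] at h
    refine Prod.ext (funext fun i => ?_) h.2.2
    have := (hle hp).1 i
    have := (hle hq).1 i
    have := h.1 i
    omega
  rw [← card_image_of_injOn hφ]
  refine Nat.subtype_card (p := IsPieriDatum (shift a) (shift c) r) _ fun t => ?_
  constructor
  · intro ht
    obtain ⟨p, hp, rfl⟩ := mem_image.1 ht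
    exact (isPieriDatum_shift_iff (hle hp).1 (hle hp).2).2 hp
  · obtain ⟨x, y, b⟩ := t
    intro ht
    have hyc := ht.le_right
    have hyx := ht.add_eq_add
    have hφt : φ (fun i => c i - y i, b) = (x, y, b) := by
      refine Prod.ext (funext fun i => ?_) (Prod.ext (funext fun i => ?_) rfl)
      all_goals
        have := hyc i
        have := hyx i
        simp only [φ]
        omega
    rw [← hφt] at ht ⊢
    refine mem_image_of_mem φ ((isPieriDatum_shift_iff (fun i => ?_) fun i => ?_).1 ht)
    · have := hyx i
      omega
    · exact Nat.sub_le _ _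

theorem strictMono_and_le_of_pieriData_nonempty {a c : Fin m → ℕ} {r : ℕ}
    (h : (pieriData a c r).Nonempty) : StrictMono c ∧ ∀ i, c i ≤ a i + r := by
  obtain ⟨p, hp⟩ := h
  obtain ⟨hd, -, hr⟩ := mem_pieriData.1 hp
  refine ⟨strictMono_right_of_mem_interlacing hd, fun i => ?_⟩
  have := (mem_interlacing.1 hd).1 i
  have := single_le_sum (f := fun i => a i + c i - 2 * p.1 i) (fun _ _ => Nat.zero_le _)
    (mem_univ i)
  omega

theorem finsum_bPieri_shift {M : Type*} [AddCommGroup M] {a : Fin m → ℕ} {r N : ℕ}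
    (hN : ∀ i, a i + r < N) (G : (Fin m → ℚ) → M) :
    ∑ᶠ lam ∈ {lam : Fin m → ℚ | DominantB lam ∧ ∀ i, ∃ z : ℤ, lam i = z},
        (bPieri (shift a) lam r : ℤ) • G lam =
      ∑ c ∈ Fintype.piFinset (fun _ => range N), #(pieriData a c r) • G (shift c) := by
  rw [setOf_dominantB_integral_eq_image_shift, finsum_mem_image shift_injective.injOn]
  simp only [bPieri_shift, natCast_zsmul]
  refine finsum_mem_eq_sum_of_inter_support_eq _ (Set.ext fun c => and_congr_left fun hc => ?_)
  have hne : (pieriData a c r).Nonempty := by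
    contrapose! hc
    simp [hc]
  obtain ⟨hmono, hle⟩ := strictMono_and_le_of_pieriData_nonempty hne
  simpa [hmono] using fun i => (hle i).trans_lt (hN i)

end Shift

section Reduction

open Finset

variable {m : ℕ}

/-- The Weyl alternant at the weight with coordinates `c i + 1 / 2`: as the Weyl group permutes the
weights with half-odd coordinates, it acts on `c` by permutations and by the reflections
`c i ↦ -1 - c i`. -/
def halfOddAlternant {M : Type*} [AddCommGroup M] (Φ : (Fin m → ℚ) → M) (c : Fin m → ℤ) : M :=
  weylAlternant Φ fun i => (c i : ℚ) + 1 / 2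

theorem isAntisymmetric_halfOddAlternant {M : Type*} [AddCommGroup M] (Φ : (Fin m → ℚ) → M) :
    IsAntisymmetric (halfOddAlternant Φ) := fun d i j hij => by
  simpa [Equiv.Perm.sign_swap hij, halfOddAlternant, Function.comp_def] using
    weylAlternant_comp_perm Φ (fun k => (d k : ℚ) + 1 / 2) (Equiv.swap i j)

theorem halfOddAlternant_reflect {R : Type*} [CommRing R] (Φ : (Fin m → ℚ) → R) (ε : Fin m → Bool)
    (c : Fin m → ℤ) :
    halfOddAlternant Φ (reflect ε c) = (∏ i, if ε i then -1 else 1) * halfOddAlternant Φ c := by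
  have hreflect : (fun i => (reflect ε c i : ℚ) + 1 / 2) =
      fun i => (if ε i then -1 else 1) * ((c i : ℚ) + 1 / 2) := by
    ext i
    simp only [reflect]
    split_ifs <;> push_cast <;> ring
  rw [halfOddAlternant, hreflect, weylAlternant_flip, zsmul_eq_mul]
  push_cast
  rfl

theorem KB_shift (c : Fin m → ℕ) (mu : Fin m → ℚ) :
    KB m (shift c) mu =
      halfOddAlternant (fun y => kostantQ (rootsB m) (y - (mu + rhoB m))) fun i => (c i : ℤ) := by
  rw [KB_eq_weylAlternant, shift_add_rhoB]
  rfl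

theorem init_add_rhoB (x : Fin (m + 1) → ℚ) :
    Fin.init (x + rhoB (m + 1)) = Fin.init x + rhoB m :=
  rfl

theorem KB_succ {l : ℕ} {ν μ : Fin (m + 1) → ℚ} (hν : ∀ i : Fin m, 0 ≤ ν i.castSucc)
    (hνμ : ∀ i : Fin m, ν i.castSucc ≤ μ (Fin.last m)) (hμ : 0 ≤ μ (Fin.last m))
    (hl : ν (Fin.last m) - μ (Fin.last m) = l) :
    KB (m + 1) ν μ = PowerSeries.X ^ l * ∑ τ ∈ piAntidiag univ l,
      weylAlternant (fun y => kostantQ (rootsB m) (y - (Fin.init μ + rhoB m)))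
        (Fin.init ν + rhoB m + fun i => (displacement τ i : ℚ)) := by
  have hρ (i : Fin (m + 1)) : 0 < rhoB (m + 1) i := by
    simp only [rhoB]
    positivity
  have hρlt (i : Fin m) : rhoB (m + 1) i.castSucc < rhoB (m + 1) (Fin.last m) := by
    simp [rhoB]
  have hνnonneg : ∀ i, 0 ≤ ν i := by
    refine Fin.lastCases ?_ hν
    rw [eq_add_of_sub_eq hl]
    positivity
  rw [KB_eq_weylAlternant, weylAlternant_kostantQ_rootsB_succ (l := l), init_add_rhoB,
    init_add_rhoB]
  · exact fun i => add_lt_add_of_le_of_lt (hνμ i) (hρlt i)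
  · exact fun i => (neg_neg_of_pos (add_pos_of_nonneg_of_pos (hνnonneg i) (hρ i))).trans
      (add_pos_of_nonneg_of_pos hμ (hρ _))
  · simpa using hl

theorem KB_top_row_reduction_general {l : ℕ} {ν μ : Fin (m + 1) → ℚ}
    (hν : Monotone (Fin.init ν : Fin m → ℚ)) (hν0 : ∀ i : Fin m, 0 ≤ ν i.castSucc)
    (hνint : ∀ i : Fin m, ∃ z : ℤ, ν i.castSucc = z)
    (hνμ : ∀ i : Fin m, ν i.castSucc ≤ μ (Fin.last m)) (hμ0 : 0 ≤ μ (Fin.last m))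
    (hl : ν (Fin.last m) - μ (Fin.last m) = l) :
    KB (m + 1) ν μ = PowerSeries.X ^ l * ∑ p ∈ range (l + 1) ×ˢ range (l + 1),
      if p.1 + 2 * p.2 = l then
        ∑ᶠ lam ∈ {lam : Fin m → ℚ | DominantB lam ∧ ∀ i, ∃ z : ℤ, lam i = z},
          (bPieri (Fin.init ν) lam p.1 : ℤ) • KB m lam (Fin.init μ)
      else 0 := by
  have := isAddTorsionFree_powerSeries ℤ
  rw [KB_succ hν0 hνμ hμ0 hl]
  obtain ⟨a, ha, hνa⟩ : Fin.init ν ∈ shift '' {a : Fin m → ℕ | StrictMono a} :=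
    setOf_dominantB_integral_eq_image_shift.subset ⟨⟨hν, hν0, Or.inl hνint⟩, hνint⟩
  have hN (i : Fin m) : a i + l < ∑ i, a i + l + 1 := by
    have := single_le_sum (f := a) (fun _ _ => Nat.zero_le _) (mem_univ i)
    omega
  have hshift (τ : Option (Fin m × Bool) → ℕ) :
      (shift a + rhoB m + fun i => (displacement τ i : ℚ)) =
        fun i => ((((fun i => (a i : ℤ)) + displacement τ) i : ℤ) : ℚ) + 1 / 2 := by
    rw [shift_add_rhoB]
    ext i
    simp only [Pi.add_apply]
    push_cast
    ring
  simp only [← hνa, hshift]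
  refine congrArg _ ((sum_add_displacement_eq_sum_card_pieriData
    (isAntisymmetric_halfOddAlternant _) (halfOddAlternant_reflect _) ha.monotone hN).trans
    (sum_congr rfl fun p hp => if_congr Iff.rfl ?_ rfl))
  have hNp (i : Fin m) : a i + p.1 < ∑ i, a i + l + 1 := by
    have := mem_range.1 (mem_product.1 hp).1
    have := hN i
    omega
  simp only [finsum_bPieri_shift hNp, KB_shift]

end Reduction

/-- If `μ_n ≥ ν_{n-1}` and `l = ν_n - μ_n ≥ 0` then
`K^{B_n}_{ν,μ}(q) = q^l ∑_{r+2m=l} ∑_λ b^λ_{ν',r} K^{B_{n-1}}_{λ,μ'}(q)`. -/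
theorem KB_top_row_reduction (n : ℕ) (hn : 2 ≤ n) (ν μ : Fin n → ℤ)
    (hν : Monotone ν) (hν0 : ∀ i, 0 ≤ ν i)
    (hμ : Monotone μ) (hμ0 : ∀ i, 0 ≤ μ i)
    (h1 : ν ⟨n - 2, by omega⟩ ≤ μ ⟨n - 1, by omega⟩)
    (h2 : μ ⟨n - 1, by omega⟩ ≤ ν ⟨n - 1, by omega⟩) :
    KB n (fun i => (ν i : ℚ)) (fun i => (μ i : ℚ)) =
      (PowerSeries.X : PowerSeries ℤ) ^ (ν ⟨n - 1, by omega⟩ - μ ⟨n - 1, by omega⟩).toNat *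
        ∑ p ∈ Finset.range ((ν ⟨n - 1, by omega⟩ - μ ⟨n - 1, by omega⟩).toNat + 1) ×ˢ
              Finset.range ((ν ⟨n - 1, by omega⟩ - μ ⟨n - 1, by omega⟩).toNat + 1),
          if p.1 + 2 * p.2 = (ν ⟨n - 1, by omega⟩ - μ ⟨n - 1, by omega⟩).toNat then
            ∑ᶠ lam ∈ {lam : Fin (n - 1) → ℚ | DominantB lam ∧ ∀ i, ∃ z : ℤ, lam i = z},
              (bPieri (restrict1 fun i => (ν i : ℚ)) lam p.1 : ℤ) •
                KB (n - 1) lam (restrict1 fun i => (μ i : ℚ))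
          else 0 := by
  obtain ⟨m, rfl⟩ : ∃ m, n = m + 2 := ⟨n - 2, by omega⟩
  have hl : (ν (Fin.last (m + 1)) : ℚ) - μ (Fin.last (m + 1)) =
      (ν (Fin.last (m + 1)) - μ (Fin.last (m + 1))).toNat := by
    exact_mod_cast (Int.toNat_of_nonneg (sub_nonneg.2 h2)).symm
  exact KB_top_row_reduction_general (ν := fun i => (ν i : ℚ)) (μ := fun i => (μ i : ℚ))
    (fun _ _ hij => Int.cast_le.2 (hν hij)) (fun _ => Int.cast_nonneg (hν0 _)) (fun _ => ⟨_, rfl⟩)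
    (fun i => Int.cast_le.2 ((hν (Nat.lt_succ_iff.1 i.2)).trans h1)) (Int.cast_nonneg (hμ0 _)) hl
end

section
/- Let n ≥ 2 and let ν = (ν_n,…,ν_1), μ = (μ_n,…,μ_1) ∈ ℤ^n with ν_n ≥ … ≥ ν_1 ≥ 0 and μ_n ≥ … ≥ μ_1 ≥ 0. Assume μ_n ≥ ν_{n−1} and ν_n − μ_n ≥ 0, and set l = ν_n − μ_n, ν' = (ν_{n−1},…,ν_1), μ' = (μ_{n−1},…,μ_1). Then K^{C_n}_{ν,μ}(q) = Σ_{(r,m) ∈ ℕ², r + 2m = l} q^{r+m} · Σ_λ c^λ_{ν',r} · K^{C_{n−1}}_{λ,μ'}(q), where the inner sum is over all dominant weights λ of type C_{n−1} (only finitely many terms are nonzero). -/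
open scoped BigOperators

/-!
In the alternating sum over signed permutations defining `KC n ν μ`, the last coordinate of
`w (ν + ρ) - (μ + ρ)` is negative unless `w` fixes the last coordinate, because `μ_n ≥ ν_{n-1}`.
For the remaining `w` it equals `l`, and only the roots `e_n ± e_i` and `2 e_n` involve it: choosing
their multiplicities `k`, `k̄` and `m` costs `q^(r + m)` with `r + 2 m = l`, `r = ∑ (k_i + k̄_i)`,
and shifts the first `n - 1` coordinates by `k̄ - k`. As the set of these shifts is invariant under
signed permutations, `KC n ν μ` is a sum, over all shifts, of a function of `ν' + ρ + k̄ - k` that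
is alternating under signed permutations.

A shift is a path going from `ν' + ρ` down by `k` and then up by `k̄`. Sign-reversing involutions
cancel the paths whose turning point has a nonpositive coordinate, then those whose descent, and
finally those whose ascent, breaks the order of the coordinates. The paths that survive are the
ones counted by the Pieri numbers.
-/

open Finset Function

namespace TopRow

section SignReversing

variable {α ι R : Type*} [LinearOrder ι] [WellFoundedLT ι] [AddCommGroup R] [IsAddTorsionFree R]

open Classical in
theorem sum_eq_sum_of_signReversing {T : Finset α} {V : ι → α → Prop} {s : ι → α → α} {F : α → R}
    (hs : ∀ i, Involutive (s i))
    (hmem : ∀ i, ∀ x ∈ T, V i x → s i x ∈ T ∧ V i (s i x))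
    (hfirst : ∀ i x, ∀ j < i, V j (s i x) → V j x)
    (hF : ∀ i x, F (s i x) = -F x) :
    ∑ x ∈ T, F x = ∑ x ∈ T with ∀ i, ¬ V i x, F x := by
  have exists_first (x : α) (hx : ∃ i, V i x) : ∃ i, V i x ∧ ∀ j < i, ¬ V j x := by
    obtain ⟨i, hi, hmin⟩ := (wellFounded_lt (α := ι)).has_min {i | V i x} hx
    exact ⟨i, hi, fun j hj hVj => hmin j hVj hj⟩
  choose first hV hlt using exists_first
  have first_s (x : α) (hx : ∃ i, V i x) (hxT : x ∈ T) (hx' : ∃ i, V i (s (first x hx) x)) :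
      first (s (first x hx) x) hx' = first x hx := by
    refine le_antisymm (not_lt.1 fun h => ?_) (not_lt.1 fun h => ?_)
    · exact hlt _ hx' _ h (hmem _ x hxT (hV x hx)).2
    · exact hlt _ hx _ h (hfirst _ x _ h (hV _ hx'))
  -- Pair every `x` with `s i x` for the least `i` such that `V i x`.
  rw [← sum_filter_add_sum_filter_not T (fun x => ∀ i, ¬ V i x), add_eq_left]
  simp only [not_forall, not_not]
  refine sum_involution (fun x hx => s (first x (mem_filter.1 hx).2) x) ?_ ?_ ?_ ?_
  · intro x _
    rw [hF, add_neg_cancel]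
  · intro x _ hFx heq
    exact hFx (self_eq_neg.1 (by conv_lhs => rw [← heq, hF]))
  · intro x hx
    obtain ⟨hxT, hx⟩ := mem_filter.1 hx
    obtain ⟨hmemT, hVs⟩ := hmem _ x hxT (hV x hx)
    exact mem_filter.2 ⟨hmemT, _, hVs⟩
  · intro x hx
    simp only [first_s x (mem_filter.1 hx).2 (mem_filter.1 hx).1, hs _ x]

end SignReversing

/-- Antisymmetry under the signed permutations of the coordinates, tested on the sign changes and
the transpositions that generate them. -/
structure IsWeylAlternating {ι k R : Type*} [DecidableEq ι] [Neg k] [Neg R]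
    (F : (ι → k) → R) : Prop where
  update_neg (x : ι → k) (i : ι) : F (update x i (-x i)) = -F x
  comp_swap (x : ι → k) {i j : ι} (hij : i ≠ j) : F (x ∘ Equiv.swap i j) = -F x

theorem IsWeylAlternating.intCast {ι k R : Type*} [DecidableEq ι] [Ring k] [Neg R]
    {F : (ι → k) → R} (hF : IsWeylAlternating F) :
    IsWeylAlternating fun x : ι → ℤ => F fun i => x i where
  update_neg x i := by
    rw [← hF.update_neg (fun j => x j) i]
    congr 1
    ext j
    rcases eq_or_ne j i with rfl | hj <;> simp [*]
  comp_swap x {i j} hij := hF.comp_swap (fun i => x i) hij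

/-- The weight `k̄ - k` by which the multiplicities `t = (k, k̄)` shift a weight. -/
def netShift {ι : Type*} (t : ι ⊕ ι → ℕ) : ι → ℚ := fun i => t (.inr i) - t (.inl i)

section DownUp

variable {ι : Type*}

/-- The path of the multiplicities `t = (k, k̄)` from `g`: first down to `g - k`, then up to
`g - k + k̄`. The multiplicities `k` and `k̄` sit on the two summands of `ι ⊕ ι`. -/
def downUpPath (g : ι → ℤ) (t : ι ⊕ ι → ℕ) : (ι → ℤ) × (ι → ℤ) :=
  (fun i => g i - t (.inl i), fun i => g i - t (.inl i) + t (.inr i))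

theorem downUpPath_injective (g : ι → ℤ) : Injective (downUpPath g) := by
  intro t t' h
  simp only [downUpPath, Prod.mk.injEq, funext_iff] at h
  funext a
  rcases a with i | i <;> grind

variable [Fintype ι] [DecidableEq ι]

/-- The paths `(p, y)` from `g` down to `p` and up to `y` of total length `r`. -/
def downUp (g : ι → ℤ) (r : ℕ) : Finset ((ι → ℤ) × (ι → ℤ)) :=
  (piAntidiag univ r).image (downUpPath g)

theorem mem_downUp {g : ι → ℤ} {r : ℕ} {x : (ι → ℤ) × (ι → ℤ)} :
    x ∈ downUp g r ↔ (∀ i, x.1 i ≤ g i) ∧ (∀ i, x.1 i ≤ x.2 i) ∧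
      ∑ i, (g i - x.1 i) + ∑ i, (x.2 i - x.1 i) = r := by
  simp only [downUp, mem_image, mem_piAntidiag, Fintype.sum_sum_type, mem_univ, implies_true,
    and_true]
  constructor
  · rintro ⟨t, rfl, rfl⟩
    simp [downUpPath]
  · rintro ⟨hpg, hpy, hsum⟩
    refine ⟨Sum.elim (fun i => (g i - x.1 i).toNat) fun i => (x.2 i - x.1 i).toNat, ?_, ?_⟩
    · zify
      simpa [Int.toNat_of_nonneg, hpg, hpy] using hsum
    · ext i <;> simp [downUpPath, hpg i, hpy i]

end DownUp

variable {M r : ℕ} {g : Fin (M + 1) → ℤ}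

/-- The paths `(p, y)` that keep the coordinates of `g`, `p` and `y` in their order. -/
def IsInterlacing (g : Fin (M + 1) → ℤ) (x : (Fin (M + 1) → ℤ) × (Fin (M + 1) → ℤ)) : Prop :=
  (∀ i, 0 < x.1 i) ∧ (∀ i : Fin M, g i.castSucc < x.1 i.succ) ∧
    ∀ i : Fin M, x.2 i.castSucc < x.1 i.succ

instance : DecidablePred (IsInterlacing g) := fun _ => inferInstanceAs (Decidable (_ ∧ _ ∧ _))

section Alternating

variable {R : Type*} [AddCommGroup R] [IsAddTorsionFree R] {F : (Fin (M + 1) → ℤ) → R}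

theorem sum_downUp_eq_sum_pos (hF : IsWeylAlternating F) (hg : ∀ i, 0 < g i) :
    ∑ x ∈ downUp g r, F x.2 = ∑ x ∈ downUp g r with ∀ i, 0 < x.1 i, F x.2 := by
  -- A path `(p, y)` has length `∑ i, (g i + y i - 2 * p i)`, and `y i - 2 * p i` is kept by
  -- `(p i, y i) ↦ (p i - y i, -y i)`.
  have key := sum_eq_sum_of_signReversing (T := downUp g r) (F := fun x => F x.2)
    (V := fun i x => x.1 i ≤ 0)
    (s := fun i x => (update x.1 i (x.1 i - x.2 i), update x.2 i (-x.2 i)))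
    (fun i x => by simp) ?_ ?_ fun i x => hF.update_neg x.2 i
  · simpa only [not_le] using key
  · intro i x hx hi
    rw [mem_downUp] at hx ⊢
    obtain ⟨hpg, hpy, hsum⟩ := hx
    simp only [update_self]
    have := hpy i
    have := hg i
    refine ⟨⟨?_, ?_, ?_⟩, by lia⟩
    · intro j
      rcases eq_or_ne j i with rfl | hj <;> grind
    · intro j
      rcases eq_or_ne j i with rfl | hj <;> grind
    · rw [← hsum, ← sum_add_distrib, ← sum_add_distrib]
      refine sum_congr rfl fun j _ => ?_
      rcases eq_or_ne j i with rfl | hj <;> grind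
  · intro i x j hj
    simp [hj.ne]

theorem forall_comp_swap_le {p q : Fin (M + 1) → ℤ} {i : Fin M} (h : ∀ j, p j ≤ q j)
    (hl : p i.succ ≤ q i.castSucc) (hr : p i.castSucc ≤ q i.succ) (j : Fin (M + 1)) :
    p (Equiv.swap i.castSucc i.succ j) ≤ q j := by
  rw [Equiv.swap_apply_def]
  grind

theorem sum_pos_eq_sum_ascending (hF : IsWeylAlternating F) (hg : StrictMono g) :
    ∑ x ∈ downUp g r with ∀ i, 0 < x.1 i, F x.2 =
      ∑ x ∈ downUp g r with (∀ i, 0 < x.1 i) ∧ ∀ i : Fin M, g i.castSucc < x.1 i.succ, F x.2 := by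
  -- The order on `Fin M` is reversed because swapping `p` at `i` and `i + 1` leaves the comparison
  -- of `p (j + 1)` with `g j` unchanged for `i < j`, but not for `j = i - 1`.
  have key := sum_eq_sum_of_signReversing (ι := (Fin M)ᵒᵈ)
    (T := {x ∈ downUp g r | ∀ i, 0 < x.1 i}) (F := fun x => F x.2)
    (V := fun i x => x.1 i.ofDual.succ ≤ g i.ofDual.castSucc)
    (s := fun i x => let τ := Equiv.swap i.ofDual.castSucc i.ofDual.succ; (x.1 ∘ τ, x.2 ∘ τ))
    (fun i x => by simp [comp_assoc, ← Equiv.coe_trans]) ?_ ?_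
    fun i x => hF.comp_swap x.2 i.ofDual.castSucc_lt_succ.ne
  · simpa only [not_le, OrderDual.forall, OrderDual.ofDual_toDual, filter_filter] using key
  · intro i x hx hi
    obtain ⟨i, rfl⟩ := OrderDual.toDual.surjective i
    simp only [mem_filter, mem_downUp, comp_apply, OrderDual.ofDual_toDual] at hx hi ⊢
    obtain ⟨⟨hpg, hpy, hsum⟩, hpos⟩ := hx
    have hgi := hg i.castSucc_lt_succ
    have hpi := hpg i.castSucc
    refine ⟨⟨⟨forall_comp_swap_le hpg hi (hpi.trans hgi.le), fun j => hpy _, ?_⟩, fun j => hpos _⟩,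
      by simpa using hpi⟩
    rw [← hsum]
    simp only [sum_sub_distrib, Equiv.sum_comp (Equiv.swap i.castSucc i.succ)]
  · intro i x j hj hVj
    obtain ⟨i, rfl⟩ := OrderDual.toDual.surjective i
    obtain ⟨j, rfl⟩ := OrderDual.toDual.surjective j
    replace hj : i < j := OrderDual.toDual_lt_toDual.1 hj
    simp only [comp_apply, OrderDual.ofDual_toDual] at hVj ⊢
    rwa [Equiv.swap_apply_of_ne_of_ne] at hVj <;> grind

theorem sum_ascending_eq_sum_interlacing (hF : IsWeylAlternating F) :
    ∑ x ∈ downUp g r with (∀ i, 0 < x.1 i) ∧ ∀ i : Fin M, g i.castSucc < x.1 i.succ, F x.2 =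
      ∑ x ∈ downUp g r with IsInterlacing g x, F x.2 := by
  have key := sum_eq_sum_of_signReversing
    (T := {x ∈ downUp g r | (∀ i, 0 < x.1 i) ∧ ∀ i : Fin M, g i.castSucc < x.1 i.succ})
    (F := fun x => F x.2) (V := fun (i : Fin M) x => x.1 i.succ ≤ x.2 i.castSucc)
    (s := fun i x => (x.1, x.2 ∘ Equiv.swap i.castSucc i.succ))
    (fun i x => by simp [comp_assoc, ← Equiv.coe_trans]) ?_ ?_
    fun i x => hF.comp_swap x.2 i.castSucc_lt_succ.ne
  · refine key.trans (sum_congr ?_ fun _ _ => rfl)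
    ext x
    simp only [mem_filter, not_le, and_assoc]
    rfl
  · intro i x hx hi
    simp only [mem_filter, mem_downUp, comp_apply] at hx ⊢
    obtain ⟨⟨hpg, hpy, hsum⟩, hpos, hgp⟩ := hx
    have hpi : x.1 i.castSucc ≤ x.2 i.succ := (hpg _).trans ((hgp i).le.trans (hpy i.succ))
    refine ⟨⟨⟨hpg, fun j => ?_, ?_⟩, hpos, hgp⟩, by simpa using hpy i.succ⟩
    · simpa using forall_comp_swap_le hpy hi hpi (Equiv.swap i.castSucc i.succ j)
    · rw [← hsum]
      simp only [sum_sub_distrib, Equiv.sum_comp (Equiv.swap i.castSucc i.succ)]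
  · intro i x j hj hVj
    simp only [comp_apply] at hVj
    rwa [Equiv.swap_apply_of_ne_of_ne] at hVj <;> grind

theorem sum_piAntidiag_eq_sum_interlacing (hF : IsWeylAlternating F) (hg : StrictMono g)
    (hg0 : ∀ i, 0 < g i) (r : ℕ) :
    ∑ t ∈ piAntidiag univ r, F (downUpPath g t).2 =
      ∑ x ∈ downUp g r with IsInterlacing g x, F x.2 := by
  rw [← sum_ascending_eq_sum_interlacing hF, ← sum_pos_eq_sum_ascending hF hg,
    ← sum_downUp_eq_sum_pos hF hg0, downUp, sum_image (downUpPath_injective g).injOn]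

end Alternating

section Pieri

theorem forall_add_one_lt_iff {P : Fin (M + 1) → Fin (M + 1) → Prop} :
    (∀ i : Fin (M + 1), ∀ h : (i : ℕ) + 1 < M + 1, P i ⟨i + 1, h⟩) ↔
      ∀ i : Fin M, P i.castSucc i.succ := by
  simp [Fin.forall_iff_castSucc, Fin.succ]

theorem isInterlacing_downUpPath_iff {lam : Fin (M + 1) → ℚ} {t : Fin (M + 1) ⊕ Fin (M + 1) → ℕ}
    (hlam : ∀ i, ((downUpPath g t).2 i : ℚ) = lam i + rhoC (M + 1) i) :
    IsInterlacing g (downUpPath g t) ↔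
      (∀ i : Fin M, lam i.castSucc ≤ lam i.succ - t (.inr i.succ)) ∧
      (∀ i : Fin M, lam i.castSucc + t (.inl i.castSucc) - t (.inr i.castSucc) ≤
        lam i.succ - t (.inr i.succ)) ∧
      0 ≤ lam 0 - t (.inr 0) := by
  have hp (i) : lam i - t (.inr i) = ((downUpPath g t).1 i - (i + 1) : ℤ) := by
    have := hlam i
    simp only [downUpPath, rhoC] at this ⊢
    push_cast at this ⊢
    linarith
  have hy (i) : lam i = ((downUpPath g t).2 i - (i + 1) : ℤ) := by
    simp [hlam, rhoC]
  have hγ (i) : lam i + t (.inl i) - t (.inr i) = (g i - (i + 1) : ℤ) := by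
    have := hp i
    simp only [downUpPath] at this
    push_cast at this ⊢
    linarith
  have hpg (i) : (downUpPath g t).1 i ≤ g i := by simp [downUpPath]
  have hyp_iff (i : Fin M) : lam i.castSucc ≤ lam i.succ - t (.inr i.succ) ↔
      (downUpPath g t).2 i.castSucc < (downUpPath g t).1 i.succ := by
    rw [hp, hy, Int.cast_le, Fin.val_succ, Fin.val_castSucc]
    lia
  have hgp_iff (i : Fin M) : lam i.castSucc + t (.inl i.castSucc) - t (.inr i.castSucc) ≤
      lam i.succ - t (.inr i.succ) ↔ g i.castSucc < (downUpPath g t).1 i.succ := by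
    rw [hp, hγ, Int.cast_le, Fin.val_succ, Fin.val_castSucc]
    lia
  have hpos_iff : 0 ≤ lam 0 - t (.inr 0) ↔ 0 < (downUpPath g t).1 0 := by
    rw [hp, Int.cast_nonneg_iff, Fin.val_zero]
    lia
  simp only [hyp_iff, hgp_iff, hpos_iff, IsInterlacing]
  refine ⟨fun ⟨hpos, hgp, hyp⟩ => ⟨hyp, hgp, hpos 0⟩, fun ⟨hyp, hgp, hpos⟩ => ⟨?_, hgp, hyp⟩⟩
  exact Fin.induction hpos fun i hi => (hi.trans_le (hpg _)).trans (hgp i)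

theorem cPieri_eq_card_interlacing {γ lam : Fin (M + 1) → ℚ}
    (hg : ∀ i, (g i : ℚ) = γ i + rhoC (M + 1) i) :
    cPieri γ lam r =
      #{x ∈ downUp g r | IsInterlacing g x ∧ ∀ i, (x.2 i : ℚ) = lam i + rhoC (M + 1) i} := by
  rw [downUp, filter_image, card_image_of_injective _ (downUpPath_injective g),
    ← Nat.subtype_card _ fun _ => Iff.rfl, cPieri]
  refine Nat.card_congr ((Equiv.sumArrowEquivProdArrow _ _ _).symm.subtypeEquiv fun t => ?_)
  set t' := (Equiv.sumArrowEquivProdArrow _ _ _).symm t with ht'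
  have hsum : ∑ i, (t.1 i + t.2 i) = r ↔ t' ∈ piAntidiag univ r := by
    simp [mem_piAntidiag, sum_add_distrib, ht', Equiv.sumArrowEquivProdArrow]
  have hy : (∀ i, (t.2 i : ℚ) - t.1 i = lam i - γ i) ↔
      ∀ i, ((downUpPath g t').2 i : ℚ) = lam i + rhoC (M + 1) i := by
    refine forall_congr' fun i => ?_
    simp only [downUpPath, ht', Equiv.sumArrowEquivProdArrow, Equiv.symm_mk, Equiv.coe_fn_mk,
      Sum.elim_inl, Sum.elim_inr, Int.cast_add, Int.cast_sub, hg, Int.cast_natCast]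
    grind
  rw [mem_filter, hsum, hy, forall_add_one_lt_iff (P := fun i j => lam i ≤ lam j - t.2 j),
    forall_add_one_lt_iff (P := fun i j => lam i + t.1 i - t.2 i ≤ lam j - t.2 j)]
  refine and_congr_right fun _ => ?_
  rw [and_comm (a := IsInterlacing _ _)]
  refine and_congr_right fun hlam => ?_
  rw [isInterlacing_downUpPath_iff hlam]
  simp [ht', Equiv.sumArrowEquivProdArrow]

theorem add_rhoC_pos {n : ℕ} {ν : Fin n → ℚ} (hν : DominantC ν) (i : Fin n) : 0 < (ν + rhoC n) i :=
  add_pos_of_nonneg_of_pos (hν.2.1 i) (Nat.cast_add_one_pos _)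

theorem IsInterlacing.dominantC {x : (Fin (M + 1) → ℤ) × (Fin (M + 1) → ℤ)}
    (hx : IsInterlacing g x) (hpy : ∀ i, x.1 i ≤ x.2 i) :
    DominantC fun i => x.2 i - rhoC (M + 1) i := by
  have hmono : Monotone fun i => x.2 i - rhoC (M + 1) i := by
    refine Fin.monotone_iff_le_succ.2 fun i => ?_
    have : (x.2 i.castSucc + 1 : ℚ) ≤ x.2 i.succ := by
      exact_mod_cast (hx.2.2 i).trans_le (hpy i.succ)
    simp only [rhoC, Fin.val_castSucc, Fin.val_succ, Nat.cast_succ]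
    linarith
  refine ⟨hmono, fun i => le_trans ?_ (hmono (Fin.zero_le i)), fun i => ⟨x.2 i - (i + 1), ?_⟩⟩
  · have : (1 : ℚ) ≤ x.2 0 := by exact_mod_cast (hx.1 0).trans_le (hpy 0)
    simpa [rhoC] using this
  · simp [rhoC]

theorem finsum_cPieri_smul {R : Type*} [AddCommGroup R] {γ : Fin (M + 1) → ℚ}
    (hg : ∀ i, (g i : ℚ) = γ i + rhoC (M + 1) i) (G : (Fin (M + 1) → ℚ) → R) :
    ∑ᶠ lam ∈ {lam | DominantC lam}, (cPieri γ lam r : ℤ) • G lam =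
      ∑ x ∈ downUp g r with IsInterlacing g x, G fun i => x.2 i - rhoC (M + 1) i := by
  have hcard (lam : Fin (M + 1) → ℚ) : cPieri γ lam r =
      #{x ∈ {x ∈ downUp g r | IsInterlacing g x} | (fun i => x.2 i - rhoC (M + 1) i) = lam} := by
    simp only [cPieri_eq_card_interlacing hg, filter_filter, funext_iff, sub_eq_iff_eq_add]
  rw [sum_comp G, finsum_mem_eq_sum_of_subset
    (t := {x ∈ downUp g r | IsInterlacing g x}.image fun x i => x.2 i - rhoC (M + 1) i)]
  · simp only [hcard, natCast_zsmul]
  · rintro lam ⟨-, hlam⟩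
    have : cPieri γ lam r ≠ 0 := fun h0 => hlam (by simp [h0])
    rw [hcard, card_ne_zero] at this
    obtain ⟨x, hx⟩ := this
    obtain ⟨hxS, rfl⟩ := mem_filter.1 hx
    exact mem_image_of_mem _ hxS
  · intro lam hlam
    obtain ⟨x, hx, rfl⟩ := mem_image.1 hlam
    obtain ⟨hx, hint⟩ := mem_filter.1 hx
    exact hint.dominantC (mem_downUp.1 hx).2.1

theorem sum_piAntidiag_eq_finsum_cPieri {R : Type*} [AddCommGroup R] [IsAddTorsionFree R]
    {A : (Fin (M + 1) → ℚ) → R} (hA : IsWeylAlternating A) {γ : Fin (M + 1) → ℚ}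
    (hγ : DominantC γ) (r : ℕ) :
    ∑ t ∈ piAntidiag univ r, A (γ + rhoC (M + 1) + netShift t) =
      ∑ᶠ lam ∈ {lam | DominantC lam}, (cPieri γ lam r : ℤ) • A (lam + rhoC (M + 1)) := by
  choose z hz using hγ.2.2
  obtain ⟨g, hg⟩ : ∃ g : Fin (M + 1) → ℤ, ∀ i, (g i : ℚ) = γ i + rhoC (M + 1) i :=
    ⟨fun i => z i + (i + 1), fun i => by simp [hz, rhoC]⟩
  have hg_mono : StrictMono g := fun i j hij => by
    have : (i : ℚ) < j := by exact_mod_cast hij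
    rw [← Int.cast_lt (R := ℚ), hg, hg, rhoC, rhoC]
    linarith [hγ.1 hij.le]
  have hg_pos (i) : 0 < g i := by
    rw [← Int.cast_pos (R := ℚ), hg]
    exact add_rhoC_pos hγ i
  rw [finsum_cPieri_smul hg fun lam => A (lam + rhoC (M + 1))]
  convert sum_piAntidiag_eq_sum_interlacing hA.intCast hg_mono hg_pos r using 3 with t _ x
  · ext i
    simp only [Pi.add_apply, netShift, downUpPath, Int.cast_add, Int.cast_sub, hg, Int.cast_natCast]
    ring
  · ext i
    simp

end Pieri

variable {N : ℕ}

section PartitionFunction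

variable {ι κ V W : Type*} [Fintype ι] [Fintype κ] [AddCommGroup V] [AddCommGroup W]

open Classical in
/-- The partition function of a finite family of vectors: the coefficient of `q^k` counts the
ways of writing `β` as a sum of `k` members of the family `v`. Unlike `kostantQ` it refers to a
parametrization of the vectors, which may be split into a sum type. -/
noncomputable def vecPartition (v : ι → V) (β : V) : PowerSeries ℤ :=
  PowerSeries.mk fun k => #{m ∈ piAntidiag univ k | ∑ i, m i • v i = β}

theorem coeff_vecPartition [DecidableEq ι] [DecidableEq V] (v : ι → V) (β : V) (k : ℕ) :
    PowerSeries.coeff k (vecPartition v β) = #{m ∈ piAntidiag univ k | ∑ i, m i • v i = β} := by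
  simp only [vecPartition, PowerSeries.coeff_mk]
  congr!

theorem vecPartition_comp_equiv (e : κ ≃ ι) (v : ι → V) (β : V) :
    vecPartition (v ∘ e) β = vecPartition v β := by
  classical
  ext k
  rw [coeff_vecPartition, coeff_vecPartition, Nat.cast_inj]
  refine card_bij' (fun m _ => m ∘ e.symm) (fun m _ => m ∘ e) ?_ ?_ ?_ ?_
  · intro m hm
    rw [mem_filter, mem_piAntidiag] at hm ⊢
    simpa [← e.sum_comp] using hm
  · intro m hm
    rw [mem_filter, mem_piAntidiag] at hm ⊢
    simpa [← e.sum_comp] using hm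
  · intro m _
    simp [comp_assoc]
  · intro m _
    simp [comp_assoc]

theorem vecPartition_map {F : Type*} [FunLike F V W] [AddMonoidHomClass F V W] {f : F}
    (hf : Injective f) (v : ι → V) (β : V) :
    vecPartition (f ∘ v) (f β) = vecPartition v β := by
  classical
  ext k
  simp only [coeff_vecPartition, comp_apply, ← map_nsmul, ← map_sum, hf.eq_iff]

theorem kostantQ_eq_vecPartition {n : ℕ} {R : Finset (Fin n → ℚ)} {v : ι → Fin n → ℚ}
    (hv : Injective v) (hR : ∀ α, α ∈ R ↔ ∃ i, v i = α) (β : Fin n → ℚ) :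
    kostantQ R β = vecPartition v β := by
  classical
  let e : ι ≃ {α // α ∈ R} :=
    (Equiv.ofInjective v hv).trans (Equiv.subtypeEquivRight fun α => (hR α).symm)
  rw [show v = Subtype.val ∘ e from rfl, vecPartition_comp_equiv]
  ext k
  rw [coeff_vecPartition, kostantQ, PowerSeries.coeff_mk,
    ← Nat.subtype_card _ fun _ => Iff.rfl]
  simp [mem_piAntidiag, Nat.cast_smul_eq_nsmul]

theorem vecPartition_sumElim {v : ι → V} {w : κ → V} {β : V} {S : Finset (κ → ℕ)}
    (hS : ∀ (m' : ι → ℕ) m, ∑ i, m' i • v i + ∑ j, m j • w j = β → m ∈ S) :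
    vecPartition (Sum.elim v w) β =
      ∑ m ∈ S, PowerSeries.X ^ (∑ j, m j) * vecPartition v (β - ∑ j, m j • w j) := by
  classical
  ext k
  rw [coeff_vecPartition, card_eq_sum_card_fiberwise (f := fun m => m ∘ Sum.inr) (t := S),
    map_sum, Nat.cast_sum]
  · refine sum_congr rfl fun m _ => ?_
    rw [PowerSeries.coeff_X_pow_mul', coeff_vecPartition]
    split_ifs with hmk
    · rw [Nat.cast_inj]
      refine card_bij' (fun a _ => a ∘ Sum.inl) (fun a _ => Sum.elim a m) ?_ ?_ ?_ ?_
      · intro a ha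
        simp only [mem_filter, mem_piAntidiag, Fintype.sum_sum_type] at ha
        obtain ⟨⟨⟨rfl, -⟩, hβ⟩, rfl⟩ := ha
        simpa [mem_piAntidiag, eq_sub_iff_add_eq] using hβ
      · intro a ha
        simpa [mem_piAntidiag, eq_sub_iff_add_eq, eq_tsub_iff_add_eq_of_le hmk] using ha
      · intro a ha
        rw [← (mem_filter.1 ha).2]
        exact Sum.elim_comp_inl_inr a
      · intro a _
        rfl
    · rw [Nat.cast_eq_zero, card_eq_zero, filter_eq_empty_iff]
      rintro a ha rfl
      simp only [mem_filter, mem_piAntidiag, Fintype.sum_sum_type] at ha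
      exact hmk (ha.1.1 ▸ Nat.le_add_left _ _)
  · intro m hm
    obtain ⟨-, hm⟩ := mem_filter.1 hm
    exact hS (m ∘ Sum.inl) _ (by simpa using hm)

end PartitionFunction

section Roots

/-- A weight of rank `N + 1` as a weight of rank `N` together with its last coordinate. -/
def snocAddEquiv (N : ℕ) : (Fin N → ℚ) × ℚ ≃+ (Fin (N + 1) → ℚ) where
  toFun x := Fin.snoc x.1 x.2
  invFun y := (Fin.init y, y (Fin.last N))
  left_inv x := by simp
  right_inv y := by simp
  map_add' x y := by
    ext i
    induction i using Fin.lastCases <;> simp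

theorem snocAddEquiv_single_zero (i : Fin N) (c : ℚ) :
    snocAddEquiv N (Pi.single i c, 0) = Pi.single i.castSucc c := by
  ext j
  induction j using Fin.lastCases <;> simp [snocAddEquiv, Pi.single_apply, Fin.castSucc_ne_last]

theorem snocAddEquiv_zero_left (c : ℚ) : snocAddEquiv N (0, c) = Pi.single (Fin.last N) c := by
  ext j
  induction j using Fin.lastCases <;> simp [snocAddEquiv, Fin.castSucc_ne_last]

/-- The positive roots of type `C_{N+1}` that involve the last coordinate, as pairs of their other
coordinates and the last one: `e_{N+1} + e_i`, `e_{N+1} - e_i` and `2 e_{N+1}`. -/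
def topRoot (N : ℕ) : (Fin N ⊕ Fin N) ⊕ Unit → (Fin N → ℚ) × ℚ :=
  Sum.elim (Sum.elim (fun i => (Pi.single i 1, 1)) fun i => (-Pi.single i 1, 1)) fun _ => (0, 2)

theorem mem_rootsC {n : ℕ} {α : Fin n → ℚ} : α ∈ rootsC n ↔
    (∃ i j, j < i ∧ Pi.single i 1 - Pi.single j 1 = α) ∨
      (∃ i j, j < i ∧ Pi.single i 1 + Pi.single j 1 = α) ∨ ∃ i, Pi.single i 2 = α := by
  simp [rootsC, rootsD]

theorem snocAddEquiv_eq_add (b : Fin N → ℚ) (c : ℚ) :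
    snocAddEquiv N (b, c) = snocAddEquiv N (b, 0) + Pi.single (Fin.last N) c := by
  rw [← snocAddEquiv_zero_left, ← map_add, Prod.mk_add_mk, add_zero, zero_add]

theorem mem_rootsC_succ {α : Fin (N + 1) → ℚ} : α ∈ rootsC (N + 1) ↔
    ∃ a, snocAddEquiv N (Sum.elim (fun α : {α // α ∈ rootsC N} => (α.1, 0)) (topRoot N) a) = α := by
  have hN : (∃ α' : {α // α ∈ rootsC N}, snocAddEquiv N (α'.1, 0) = α) ↔
      (∃ i j : Fin N, j < i ∧ Pi.single i.castSucc 1 - Pi.single j.castSucc 1 = α) ∨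
        (∃ i j : Fin N, j < i ∧ Pi.single i.castSucc 1 + Pi.single j.castSucc 1 = α) ∨
        ∃ i : Fin N, Pi.single i.castSucc 2 = α := by
    simp only [← snocAddEquiv_single_zero, ← map_add, ← map_sub, Prod.mk_add_mk, Prod.mk_sub_mk,
      add_zero, sub_zero, Subtype.exists, mem_rootsC]
    aesop
  have htop (i : Fin N) (c : ℚ) : snocAddEquiv N (Pi.single i 1, c) =
      Pi.single (Fin.last N) c + Pi.single i.castSucc 1 := by
    rw [snocAddEquiv_eq_add, snocAddEquiv_single_zero]
    exact add_comm _ _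
  have htop' (i : Fin N) (c : ℚ) : snocAddEquiv N (-Pi.single i 1, c) =
      Pi.single (Fin.last N) c - Pi.single i.castSucc 1 := by
    rw [snocAddEquiv_eq_add, ← neg_zero, ← Prod.neg_mk, map_neg, snocAddEquiv_single_zero,
      neg_add_eq_sub]
  have hlast (i : Fin N) : ¬ Fin.last N < i.castSucc := (Fin.le_last _).not_gt
  simp only [mem_rootsC, Sum.exists, Fin.exists_fin_succ', Sum.elim_inl, Sum.elim_inr, topRoot, hN,
    htop, htop', snocAddEquiv_zero_left, Fin.castSucc_lt_castSucc_iff, Fin.castSucc_lt_last,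
    Fin.lt_irrefl, hlast, true_and, false_and, exists_false, or_false,
    exists_or, exists_const]
  ac_nf

theorem topRoot_injective : Injective (topRoot N) := by
  have hsingle (i j : Fin N) : (Pi.single i 1 : Fin N → ℚ) ≠ -Pi.single j 1 := fun h => by
    have h' := congrFun h i
    rw [Pi.single_eq_same, Pi.neg_apply, Pi.single_apply] at h'
    split_ifs at h' <;> norm_num at h'
  have hinj : Injective fun i : Fin N => (Pi.single i 1 : Fin N → ℚ) := fun i j h => by
    by_contra hij
    simpa [hij] using congrFun h i
  rintro ((i | i) | ⟨⟩) ((j | j) | ⟨⟩) h <;>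
    simp_all [topRoot, hinj.eq_iff, (hsingle _ _).symm]

theorem rootFamily_injective :
    Injective (Sum.elim (fun α : {α // α ∈ rootsC N} => (α.1, (0 : ℚ))) (topRoot N)) := by
  refine Injective.sumElim (fun α α' h => Subtype.ext (congrArg Prod.fst h)) topRoot_injective ?_
  rintro α ((j | j) | ⟨⟩) <;> simp [topRoot]

theorem sum_smul_topRoot (m : (Fin N ⊕ Fin N) ⊕ Unit → ℕ) :
    ∑ a, m a • topRoot N a =
      (-netShift (m ∘ Sum.inl), ((∑ a, m (Sum.inl a) + 2 * m (Sum.inr ()) : ℕ) : ℚ)) := by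
  ext i
  · simp [topRoot, netShift, Fintype.sum_sum_type, Prod.fst_sum, Pi.single_apply, sub_eq_add_neg]
  · simp [topRoot, Fintype.sum_sum_type, Prod.snd_sum, mul_comm]

theorem kostantQ_eq_zero_of_neg {n : ℕ} {R : Finset (Fin n → ℚ)} {β : Fin n → ℚ} {i : Fin n}
    (hR : ∀ α ∈ R, 0 ≤ α i) (hβ : β i < 0) : kostantQ R β = 0 := by
  ext k
  rw [kostantQ, PowerSeries.coeff_mk, map_zero, Nat.cast_eq_zero, Nat.card_eq_zero]
  refine .inl ⟨fun ⟨m, _, hm⟩ => hβ.not_ge ?_⟩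
  rw [← hm, Finset.sum_apply]
  exact sum_nonneg fun α _ => mul_nonneg (Nat.cast_nonneg _) (hR α α.2)

theorem rootsC_last_nonneg {α : Fin (N + 1) → ℚ} (hα : α ∈ rootsC (N + 1)) :
    0 ≤ α (Fin.last N) := by
  obtain ⟨(α | (i | i) | i), rfl⟩ := mem_rootsC_succ.1 hα <;> simp [snocAddEquiv, topRoot]

theorem vecPartition_rootsC_zero (b : Fin N → ℚ) :
    vecPartition (fun α : {α // α ∈ rootsC N} => (α.1, (0 : ℚ))) (b, 0) =
      kostantQ (rootsC N) b := by
  rw [kostantQ_eq_vecPartition Subtype.val_injective fun α =>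
    ⟨fun hα => ⟨⟨α, hα⟩, rfl⟩, fun ⟨α', hα'⟩ => hα' ▸ α'.2⟩]
  exact vecPartition_map (f := AddMonoidHom.inl (Fin N → ℚ) ℚ)
    (fun _ _ h => congrArg Prod.fst h) _ b

/-- The pairs `(r, m)` with `r + 2 m = l`. -/
def topDegrees (l : ℕ) : Finset (ℕ × ℕ) :=
  {p ∈ range (l + 1) ×ˢ range (l + 1) | p.1 + 2 * p.2 = l}

theorem mem_topDegrees {l : ℕ} {p : ℕ × ℕ} : p ∈ topDegrees l ↔ p.1 + 2 * p.2 = l := by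
  simp only [topDegrees, mem_filter, mem_product, mem_range]
  omega

theorem kostantQ_rootsC_succ_eq_vecPartition (x : (Fin N → ℚ) × ℚ) :
    kostantQ (rootsC (N + 1)) (snocAddEquiv N x) =
      vecPartition (Sum.elim (fun α : {α // α ∈ rootsC N} => (α.1, 0)) (topRoot N)) x := by
  rw [kostantQ_eq_vecPartition ((snocAddEquiv N).injective.comp rootFamily_injective)
    fun α => mem_rootsC_succ]
  exact vecPartition_map (snocAddEquiv N).injective _ x

theorem kostantQ_rootsC_succ (b : Fin N → ℚ) (l : ℕ) :
    kostantQ (rootsC (N + 1)) (snocAddEquiv N (b, l)) =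
      ∑ p ∈ topDegrees l, PowerSeries.X ^ (p.1 + p.2) *
        ∑ t ∈ piAntidiag univ p.1, kostantQ (rootsC N) (b + netShift t) := by
  let topMult (x : (_ : ℕ × ℕ) × (Fin N ⊕ Fin N → ℕ)) : (Fin N ⊕ Fin N) ⊕ Unit → ℕ :=
    Sum.elim x.2 fun _ => x.1.2
  let T : Finset ((_ : ℕ × ℕ) × (Fin N ⊕ Fin N → ℕ)) :=
    (topDegrees l).sigma fun p => piAntidiag univ p.1
  have hS (m' : {α // α ∈ rootsC N} → ℕ) (m : (Fin N ⊕ Fin N) ⊕ Unit → ℕ)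
      (h : ∑ i, m' i • ((i : Fin N → ℚ), (0 : ℚ)) + ∑ a, m a • topRoot N a = (b, (l : ℚ))) :
      m ∈ T.image topMult := by
    have hl := congrArg Prod.snd h
    rw [sum_smul_topRoot, Prod.snd_add, Prod.snd_sum] at hl
    simp only [Prod.smul_snd, smul_zero, sum_const_zero, zero_add, Nat.cast_inj] at hl
    refine mem_image.2 ⟨⟨(∑ a, m (Sum.inl a), m (Sum.inr ())), m ∘ Sum.inl⟩, ?_, ?_⟩
    · simpa [T, mem_topDegrees] using hl
    · exact Sum.elim_comp_inl_inr m
  have hinj : Set.InjOn topMult T := by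
    rintro ⟨p, t⟩ hp ⟨p', t'⟩ hp' h
    obtain rfl : t = t' := congrArg (· ∘ Sum.inl) h
    have hm : p.2 = p'.2 := congrFun h (Sum.inr ())
    simp only [T, coe_sigma, Set.mem_sigma_iff, mem_coe, mem_topDegrees] at hp hp'
    obtain rfl : p = p' := Prod.ext (by omega) hm
    rfl
  rw [kostantQ_rootsC_succ_eq_vecPartition, vecPartition_sumElim hS, sum_image hinj, sum_sigma]
  refine sum_congr rfl fun p hp => ?_
  rw [mul_sum]
  refine sum_congr rfl fun t ht => ?_
  obtain ⟨ht, -⟩ := mem_piAntidiag.1 ht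
  rw [mem_topDegrees] at hp
  have hq : ∑ a, topMult ⟨p, t⟩ a = p.1 + p.2 := by simp [topMult, Fintype.sum_sum_type, ← ht]
  have hβ : (b, (l : ℚ)) - ∑ a, topMult ⟨p, t⟩ a • topRoot N a = (b + netShift t, 0) := by
    rw [sum_smul_topRoot]
    simp [topMult, ht, ← hp]
  rw [hq, hβ, vecPartition_rootsC_zero]

end Roots

section Weyl

variable {A : Type*} [AddCommGroup A]

/-- The alternating sum of `f` over the orbit of `x` under the signed permutations. -/
noncomputable def weylAlternant (f : (Fin N → ℚ) → A) (x : Fin N → ℚ) : A :=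
  ∑ σ : Equiv.Perm (Fin N), ∑ ε : Fin N → Bool, wDet σ ε • f (wAct σ ε x)

theorem wAct_add (σ : Equiv.Perm (Fin N)) (ε : Fin N → Bool) (x y : Fin N → ℚ) :
    wAct σ ε (x + y) = wAct σ ε x + wAct σ ε y := by
  ext i
  exact mul_add _ _ _

theorem wAct_update_neg (σ : Equiv.Perm (Fin N)) (ε : Fin N → Bool) (x : Fin N → ℚ) (i : Fin N) :
    wAct σ ε (update x i (-x i)) = wAct σ (update ε (σ i) (!ε (σ i))) x := by
  ext j
  rcases eq_or_ne j (σ i) with rfl | hj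
  · cases h : ε (σ i) <;> simp [wAct, h]
  · have hj' : σ⁻¹ j ≠ i := fun h => hj (Equiv.Perm.inv_eq_iff_eq.1 h)
    simp only [wAct, update_of_ne hj, update_of_ne hj']

theorem wDet_update_not (σ : Equiv.Perm (Fin N)) (ε : Fin N → Bool) (i : Fin N) :
    wDet σ (update ε i (!ε i)) = -wDet σ ε := by
  have h (j : Fin N) : (if update ε i (!ε i) j then -1 else 1 : ℤ) =
      (if j = i then -1 else 1) * if ε j then -1 else 1 := by
    rcases eq_or_ne j i with rfl | hj
    · cases ε j <;> simp
    · simp [hj]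
  simp only [wDet, h, prod_mul_distrib, prod_ite_eq', mem_univ, if_true]
  ring

theorem wAct_comp_swap (σ : Equiv.Perm (Fin N)) (ε : Fin N → Bool) (x : Fin N → ℚ) (i j : Fin N) :
    wAct σ ε (x ∘ Equiv.swap i j) = wAct (σ * Equiv.swap i j) ε x := by
  ext k
  simp [wAct]

theorem wDet_mul_swap (σ : Equiv.Perm (Fin N)) (ε : Fin N → Bool) {i j : Fin N} (hij : i ≠ j) :
    wDet (σ * Equiv.swap i j) ε = -wDet σ ε := by
  simp [wDet, Equiv.Perm.sign_swap hij]

theorem isWeylAlternating_weylAlternant (f : (Fin N → ℚ) → A) :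
    IsWeylAlternating (weylAlternant f) where
  update_neg x i := by
    have hflip (j : Fin N) : Involutive fun ε : Fin N → Bool => update ε j (!ε j) := fun ε => by
      simp
    rw [weylAlternant, weylAlternant, ← sum_neg_distrib]
    refine sum_congr rfl fun σ _ => ?_
    rw [← sum_neg_distrib]
    refine Fintype.sum_equiv (hflip (σ i)).toPerm _ _ fun ε => ?_
    simp only [Involutive.coe_toPerm, wAct_update_neg, wDet_update_not, neg_smul, neg_neg]
  comp_swap x {i j} hij := by
    rw [weylAlternant, weylAlternant, ← sum_neg_distrib]
    refine Fintype.sum_equiv (Equiv.mulRight (Equiv.swap i j)) _ _ fun σ => ?_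
    simp only [Equiv.coe_mulRight, wAct_comp_swap, wDet_mul_swap _ _ hij, neg_smul,
      sum_neg_distrib, neg_neg]

theorem exists_perm_wAct_netShift (σ : Equiv.Perm (Fin N)) (ε : Fin N → Bool) :
    ∃ e : Equiv.Perm (Fin N ⊕ Fin N), ∀ t, wAct σ ε (netShift t) = netShift (t ∘ e) := by
  let e : Fin N ⊕ Fin N → Fin N ⊕ Fin N :=
    Sum.elim (fun i => if ε i then .inr (σ⁻¹ i) else .inl (σ⁻¹ i))
      fun i => if ε i then .inl (σ⁻¹ i) else .inr (σ⁻¹ i)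
  have he : Injective e := by
    rintro (i | i) (j | j) h <;> cases hi : ε i <;> cases hj : ε j <;> simp_all [e]
  refine ⟨Equiv.ofBijective e (Finite.injective_iff_bijective.1 he), fun t => ?_⟩
  ext i
  cases h : ε i <;> simp [wAct, netShift, e, h]

theorem sum_piAntidiag_wAct_netShift (σ : Equiv.Perm (Fin N)) (ε : Fin N → Bool)
    (g : (Fin N → ℚ) → A) (r : ℕ) :
    ∑ t ∈ piAntidiag univ r, g (wAct σ ε (netShift t)) =
      ∑ t ∈ piAntidiag univ r, g (netShift t) := by
  obtain ⟨e, he⟩ := exists_perm_wAct_netShift σ ε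
  simp only [he]
  refine sum_equiv (e.symm.arrowCongr (Equiv.refl ℕ)) (fun t => ?_) fun t _ => rfl
  simp only [mem_piAntidiag, mem_univ, implies_true, and_true]
  exact (Equiv.sum_comp e t).symm ▸ Iff.rfl

theorem sum_piAntidiag_weylAlternant (f : (Fin N → ℚ) → A) (x : Fin N → ℚ) (r : ℕ) :
    weylAlternant (fun y => ∑ t ∈ piAntidiag univ r, f (y + netShift t)) x =
      ∑ t ∈ piAntidiag univ r, weylAlternant f (x + netShift t) := by
  simp only [weylAlternant, wAct_add]
  rw [sum_comm (s := piAntidiag univ r)]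
  refine sum_congr rfl fun σ _ => ?_
  rw [sum_comm (s := piAntidiag univ r)]
  refine sum_congr rfl fun ε _ => ?_
  rw [← smul_sum, sum_piAntidiag_wAct_netShift σ ε fun z => f (wAct σ ε x + z)]

theorem weylAlternant_sum_mul {κ R : Type*} [Ring R] (s : Finset κ) (a : κ → R)
    (f : κ → (Fin N → ℚ) → R) (x : Fin N → ℚ) :
    weylAlternant (fun y => ∑ p ∈ s, a p * f p y) x = ∑ p ∈ s, a p * weylAlternant (f p) x := by
  simp only [weylAlternant, smul_sum, mul_sum, mul_smul_comm]
  exact (sum_congr rfl fun σ _ => sum_comm).trans sum_comm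

end Weyl

section RankReduction

/-- The extension of a permutation of `Fin N` to `Fin (N + 1)` that fixes the last element. -/
def permSnoc (σ : Equiv.Perm (Fin N)) : Equiv.Perm (Fin (N + 1)) :=
  finSuccEquivLast.symm.permCongr (Equiv.optionCongr σ)

theorem permSnoc_castSucc (σ : Equiv.Perm (Fin N)) (i : Fin N) :
    permSnoc σ i.castSucc = (σ i).castSucc := by
  simp [permSnoc]

theorem permSnoc_last (σ : Equiv.Perm (Fin N)) : permSnoc σ (Fin.last N) = Fin.last N := by
  simp [permSnoc]

theorem permSnoc_injective : Injective (permSnoc (N := N)) :=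
  (Equiv.injective _).comp Equiv.optionCongr_injective

theorem exists_permSnoc_eq {σ : Equiv.Perm (Fin (N + 1))} (hσ : σ (Fin.last N) = Fin.last N) :
    ∃ τ, permSnoc τ = σ := by
  refine ⟨Equiv.removeNone (finSuccEquivLast.permCongr σ), ?_⟩
  rw [permSnoc, map_equiv_removeNone]
  ext i
  simp [hσ]

theorem sign_permSnoc (σ : Equiv.Perm (Fin N)) :
    Equiv.Perm.sign (permSnoc σ) = Equiv.Perm.sign σ := by
  rw [permSnoc, Equiv.Perm.sign_permCongr, Equiv.optionCongr_sign]

theorem wDet_permSnoc (σ : Equiv.Perm (Fin N)) (ε : Fin N → Bool) :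
    wDet (permSnoc σ) (Fin.snoc ε false : Fin (N + 1) → Bool) = wDet σ ε := by
  simp [wDet, sign_permSnoc, Fin.prod_univ_castSucc]

theorem wAct_permSnoc (σ : Equiv.Perm (Fin N)) (ε : Fin N → Bool) (x : Fin (N + 1) → ℚ) :
    wAct (permSnoc σ) (Fin.snoc ε false : Fin (N + 1) → Bool) x =
      Fin.snoc (wAct σ ε (Fin.init x)) (x (Fin.last N)) := by
  ext i
  induction i using Fin.lastCases with
  | last =>
    have h : (permSnoc σ)⁻¹ (Fin.last N) = Fin.last N :=
      Equiv.Perm.inv_eq_iff_eq.2 (permSnoc_last σ).symm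
    simp [wAct, h]
  | cast i =>
    have h : (permSnoc σ)⁻¹ i.castSucc = (σ⁻¹ i).castSucc :=
      Equiv.Perm.inv_eq_iff_eq.2 (by simp [permSnoc_castSucc])
    simp [wAct, h, Fin.init]

theorem weylAlternant_snoc {A : Type*} [AddCommGroup A] {f : (Fin (N + 1) → ℚ) → A}
    {x : Fin (N + 1) → ℚ} {c : ℚ} (hf : ∀ y, y (Fin.last N) < c → f y = 0)
    (hx : ∀ i : Fin N, |x i.castSucc| < c) (hlast : -x (Fin.last N) < c) :
    weylAlternant f x =
      weylAlternant (fun y : Fin N → ℚ => f (Fin.snoc y (x (Fin.last N)))) (Fin.init x) := by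
  let e (w : Equiv.Perm (Fin N) × (Fin N → Bool)) :
      Equiv.Perm (Fin (N + 1)) × (Fin (N + 1) → Bool) :=
    (permSnoc w.1, Fin.snoc w.2 false)
  have he : Injective e := fun w w' h =>
    Prod.ext (permSnoc_injective (congrArg Prod.fst h))
      (by simpa [e] using congrArg (fun v => Fin.init (α := fun _ => Bool) v.2) h)
  rw [weylAlternant, weylAlternant, ← Fintype.sum_prod_type', ← Fintype.sum_prod_type']
  refine (Fintype.sum_of_injective e he _ _ ?_ fun w => ?_).symm
  · rintro ⟨σ, ε⟩ hσε
    refine smul_eq_zero_of_right _ (hf _ ?_)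
    obtain ⟨i, hi⟩ | hi := (σ⁻¹ (Fin.last N)).eq_castSucc_or_eq_last
    · have := abs_lt.1 (hx i)
      simp only [wAct, hi]
      split_ifs <;> linarith
    · obtain ⟨τ, rfl⟩ := exists_permSnoc_eq (Equiv.Perm.inv_eq_iff_eq.1 hi).symm
      obtain hε : ε (Fin.last N) = true := by
        by_contra hε
        refine hσε ⟨(τ, Fin.init ε), Prod.ext rfl ?_⟩
        simp [e, ← Bool.eq_false_of_not_eq_true hε]
      simpa [wAct, hi, hε] using hlast
  · simp [e, wDet_permSnoc, wAct_permSnoc]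

theorem weylAlternant_kostantQ_succ {M x : Fin (N + 1) → ℚ} {l : ℕ}
    (hx : ∀ i : Fin N, |x i.castSucc| < M (Fin.last N)) (hlast : -x (Fin.last N) < M (Fin.last N))
    (hl : x (Fin.last N) - M (Fin.last N) = l) :
    weylAlternant (fun y => kostantQ (rootsC (N + 1)) (y - M)) x =
      ∑ p ∈ topDegrees l, PowerSeries.X ^ (p.1 + p.2) * ∑ t ∈ piAntidiag univ p.1,
        weylAlternant (fun y => kostantQ (rootsC N) (y - Fin.init M))
          (Fin.init x + netShift t) := by
  rw [weylAlternant_snoc (c := M (Fin.last N)) (fun y hy => kostantQ_eq_zero_of_neg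
    (fun α hα => rootsC_last_nonneg hα) (by simpa using hy)) hx hlast]
  have hsnoc (y : Fin N → ℚ) :
      (Fin.snoc y (x (Fin.last N)) : Fin (N + 1) → ℚ) - M =
        snocAddEquiv N (y - Fin.init M, l) := by
    ext i
    induction i using Fin.lastCases <;> simp [snocAddEquiv, Fin.init, ← hl]
  simp only [hsnoc, kostantQ_rootsC_succ, weylAlternant_sum_mul, ← sum_piAntidiag_weylAlternant,
    sub_add_eq_add_sub]

end RankReduction

section Reduction

theorem KC_eq_weylAlternant {n : ℕ} (lam mu : Fin n → ℚ) : KC n lam mu =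
    weylAlternant (fun y => kostantQ (rootsC n) (y - (mu + rhoC n))) (lam + rhoC n) := rfl

theorem dominantC_init {ν : Fin (N + 1) → ℚ} (hν : DominantC ν) : DominantC (Fin.init ν) :=
  ⟨fun _ _ hij => hν.1 (Fin.castSucc_le_castSucc_iff.2 hij), fun _ => hν.2.1 _, fun _ => hν.2.2 _⟩

instance {R : Type*} [Semiring R] [IsAddTorsionFree R] : IsAddTorsionFree (PowerSeries R) :=
  inferInstanceAs (IsAddTorsionFree ((Unit →₀ ℕ) → R))

end Reduction

end TopRow

open TopRow in
theorem KC_top_row_reduction_general {M l : ℕ} {ν μ : Fin (M + 2) → ℚ} (hν : DominantC ν)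
    (h1 : ν (Fin.last M).castSucc ≤ μ (Fin.last (M + 1)))
    (hl : ν (Fin.last (M + 1)) - μ (Fin.last (M + 1)) = l) :
    KC (M + 2) ν μ =
      ∑ p ∈ range (l + 1) ×ˢ range (l + 1),
        if p.1 + 2 * p.2 = l then
          (PowerSeries.X : PowerSeries ℤ) ^ (p.1 + p.2) *
            ∑ᶠ lam ∈ {lam : Fin (M + 1) → ℚ | DominantC lam},
              (cPieri (restrict1 ν) lam p.1 : ℤ) • KC (M + 1) lam (restrict1 μ)
        else 0 := by
  have hpos := add_rhoC_pos hν
  have hlt (i : Fin (M + 1)) :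
      (ν + rhoC (M + 2)) i.castSucc < (μ + rhoC (M + 2)) (Fin.last (M + 1)) := by
    refine add_lt_add_of_le_of_lt ((hν.1 ?_).trans h1) ?_
    · exact Fin.castSucc_le_castSucc_iff.2 i.le_last
    · exact add_lt_add_left (Nat.cast_lt.2 i.2) 1
  have hdiff : (ν + rhoC (M + 2)) (Fin.last (M + 1)) -
      (μ + rhoC (M + 2)) (Fin.last (M + 1)) = l := by
    rw [Pi.add_apply, Pi.add_apply, add_sub_add_right_eq_sub, hl]
  rw [KC_eq_weylAlternant, weylAlternant_kostantQ_succ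
    (fun i => (abs_of_pos (hpos _)).trans_lt (hlt i))
    ((neg_neg_of_pos (hpos _)).trans ((hpos _).trans (hlt 0))) hdiff, topDegrees, sum_filter]
  refine sum_congr rfl fun p _ => if_congr Iff.rfl (congrArg _ ?_) rfl
  exact sum_piAntidiag_eq_finsum_cPieri (isWeylAlternating_weylAlternant _) (dominantC_init hν) p.1

/-- If `μ_n ≥ ν_{n-1}` and `l = ν_n - μ_n ≥ 0` then
`K^{C_n}_{ν,μ}(q) = ∑_{r+2m=l} q^{r+m} ∑_λ c^λ_{ν',r} K^{C_{n-1}}_{λ,μ'}(q)`. -/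
theorem KC_top_row_reduction (n : ℕ) (hn : 2 ≤ n) (ν μ : Fin n → ℤ)
    (hν : Monotone ν) (hν0 : ∀ i, 0 ≤ ν i)
    (hμ : Monotone μ) (hμ0 : ∀ i, 0 ≤ μ i)
    (h1 : ν ⟨n - 2, by omega⟩ ≤ μ ⟨n - 1, by omega⟩)
    (h2 : μ ⟨n - 1, by omega⟩ ≤ ν ⟨n - 1, by omega⟩) :
    KC n (fun i => (ν i : ℚ)) (fun i => (μ i : ℚ)) =
      ∑ p ∈ Finset.range ((ν ⟨n - 1, by omega⟩ - μ ⟨n - 1, by omega⟩).toNat + 1) ×ˢ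
            Finset.range ((ν ⟨n - 1, by omega⟩ - μ ⟨n - 1, by omega⟩).toNat + 1),
        if p.1 + 2 * p.2 = (ν ⟨n - 1, by omega⟩ - μ ⟨n - 1, by omega⟩).toNat then
          (PowerSeries.X : PowerSeries ℤ) ^ (p.1 + p.2) *
            ∑ᶠ lam ∈ {lam : Fin (n - 1) → ℚ | DominantC lam},
              (cPieri (restrict1 fun i => (ν i : ℚ)) lam p.1 : ℤ) •
                KC (n - 1) lam (restrict1 fun i => (μ i : ℚ))
        else 0 := by
  obtain ⟨M, rfl⟩ := Nat.exists_eq_add_of_le' hn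
  exact KC_top_row_reduction_general
    ⟨fun i j hij => Int.cast_le.2 (hν hij), fun i => Int.cast_nonneg (hν0 i), fun i => ⟨_, rfl⟩⟩
    (Int.cast_le.2 h1) (by exact_mod_cast (Int.toNat_of_nonneg (sub_nonneg.2 h2)).symm)
end
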